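/- arXiv:2503.22094 — 3 statements merged into one kernel-verified Lean document; each statement's English description precedes it below -/
import Mathlib

section
/- There exists a constant c₁ > 0 such that for all integers t ≥ 3, the Ramsey number satisfies r(4,t) ≥ c₁ · t³/(log t)⁴. -/
/-!
The lower bound comes from the Hermitian unital (Mattheus and Verstraete). Let `q` be a prime and
`F` the field with `q²` elements. The points are the affine points of the Hermitian curve
`y^q + y = x^(q+1)`, at most `q³` of them, and the lines are the non-tangent lines `Y = a X + b`,
between `q⁴ - q³` and `q⁴` of them, each carrying at least `q` points. Four lines that meet
pairwise in points of the curve always include three through a common point of the curve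
(`det_mul_eq_zero`): otherwise the six intersection points yield three independent isotropic vectors
whose Gram matrix is a skew `3 × 3` matrix with zero diagonal, hence singular, although the form is
nondegenerate.

At every point, the lines through it are coloured with two colours, and two lines are joined when
they meet in a point at which they get different colours (`bichromaticGraph`). A `K₄` would contain
three lines through one point with three different colours, so the graph is `K₄`-free for every
colouring. For a random colouring, an exponential moment bound and a union bound over all sets `X`
of at least `4q²` lines show that the colour classes in `X` are balanced on average
(`exists_coloring`), and then Cauchy-Schwarz gives a vertex of degree at least `|X| / (256 q)`
inside `X` (`exists_large_degree`).

Such a graph has few independent sets by the Kleitman-Winston argument, carried out here on the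
independence polynomial `Z(A) = ∑ z^|I|`: the recursion `Z(A) ≤ Z(A - v) + z Z(A - N[v])` at a
vertex of large degree gives `Z(A) ≤ (1 + z)^R (1 + |A| z)^k` as soon as `|A| (1 - α)^k ≤ R`
(`indepPoly_le`). Taking `z = t / (4q²)` with `t` of order `q log² q` bounds the number of
independent `t`-sets by about `(C q² / t)^t`. A random partition of the vertices into
`s ≈ C q² / t` parts then leaves no independent `t`-set inside a part, and the largest part has at
least `q⁴ / (2s)` vertices, which is of order `q² t`, that is `t³ / log⁴ t`. Bertrand's postulate
supplies a suitable prime for every large `t`.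
-/

/-- `I` is an independent set in `G`. -/
def IsIndepFinset {V : Type*} (G : SimpleGraph V) (I : Finset V) : Prop :=
  ∀ u ∈ I, ∀ v ∈ I, ¬ G.Adj u v

/-- The Ramsey number `r(s,t)`: the minimum `n` such that every `K_s`-free graph on `n`
vertices contains an independent set of size `t`. -/
noncomputable def ramseyClique (s t : ℕ) : ℕ :=
  sInf {n : ℕ | ∀ G : SimpleGraph (Fin n), G.CliqueFree s →
    ∃ I : Finset (Fin n), I.card = t ∧ IsIndepFinset G I}


/-! ### Finiteness of Ramsey numbers -/

/-- Ramsey's theorem for graphs: without it the set in `ramseyClique` could be empty, and its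
infimum would take the junk value `0`. -/
theorem exists_clique_or_indep (s t : ℕ) : ∃ N : ℕ, ∀ (V : Type) (G : SimpleGraph V)
    (A : Finset V), N ≤ A.card →
    (∃ K ⊆ A, G.IsNClique s K) ∨ (∃ I ⊆ A, I.card = t ∧ IsIndepFinset G I) := by
  classical
  induction s generalizing t with
  | zero => exact ⟨0, fun V G A _ => Or.inl ⟨∅, by simp, by simp⟩⟩
  | succ s ihs =>
    induction t with
    | zero => exact ⟨0, fun V G A _ => Or.inr ⟨∅, by simp, by simp, by simp [IsIndepFinset]⟩⟩
    | succ t iht =>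
      obtain ⟨N₁, h₁⟩ := ihs (t + 1)
      obtain ⟨N₂, h₂⟩ := iht
      refine ⟨N₁ + N₂ + 1, fun V G A hA => ?_⟩
      obtain ⟨v, hv⟩ : A.Nonempty := Finset.card_pos.mp (by omega)
      have hsplit := Finset.card_filter_add_card_filter_not (s := A.erase v) (G.Adj v)
      rw [Finset.card_erase_of_mem hv] at hsplit
      have sub : ∀ p : V → Prop, [DecidablePred p] → (A.erase v).filter p ⊆ A := fun p _ =>
        (Finset.filter_subset _ _).trans (Finset.erase_subset _ _)
      by_cases hc : N₁ ≤ ((A.erase v).filter (G.Adj v)).card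
      · rcases h₁ V G _ hc with ⟨K, hK, hKc⟩ | ⟨I, hI, hI'⟩
        · refine Or.inl ⟨insert v K, Finset.insert_subset hv (hK.trans (sub _)), hKc.insert ?_⟩
          intro b hb
          exact (Finset.mem_filter.mp (hK hb)).2
        · exact Or.inr ⟨I, hI.trans (sub _), hI'⟩
      · rcases h₂ V G ((A.erase v).filter (fun w => ¬ G.Adj v w)) (by omega) with
          ⟨K, hK, hKc⟩ | ⟨I, hI, hIc, hI'⟩
        · exact Or.inl ⟨K, hK.trans (sub _), hKc⟩
        · have hvI : v ∉ I := fun h => by simpa using hI h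
          refine Or.inr ⟨insert v I, Finset.insert_subset hv (hI.trans (sub _)),
            by rw [Finset.card_insert_of_notMem hvI, hIc], ?_⟩
          have key : ∀ w ∈ I, ¬ G.Adj v w := fun w hw => (Finset.mem_filter.mp (hI hw)).2
          intro a ha b hb
          rcases Finset.mem_insert.mp ha with rfl | ha' <;>
            rcases Finset.mem_insert.mp hb with rfl | hb'
          · exact G.loopless.irrefl _
          · exact key _ hb'
          · exact fun h => key _ ha' h.symm
          · exact hI' a ha' b hb'

/-! ### The Hermitian form and its isotropic vectors -/

section Hermitian

variable {F : Type*} [Field F] (σ : F →+* F)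

/-- The sesquilinear form `u₀ σ(v₀) - u₁ σ(v₂) - u₂ σ(v₁)`; for `σ` the `q`-Frobenius, the affine
points `(x, y, 1)` isotropic for it form the Hermitian curve `y^q + y = x^(q+1)`. -/
def herm (u v : Fin 3 → F) : F := u 0 * σ (v 0) - u 1 * σ (v 2) - u 2 * σ (v 1)

/-- The determinant of the matrix with rows `u`, `v`, `w`. -/
def det₃ (u v w : Fin 3 → F) : F :=
  u 0 * (v 1 * w 2 - v 2 * w 1) - u 1 * (v 0 * w 2 - v 2 * w 0) + u 2 * (v 0 * w 1 - v 1 * w 0)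

/-- The cross product: homogeneous coordinates of the intersection point of the lines with
coordinate vectors `l` and `m`. -/
def meet (l m : Fin 3 → F) : Fin 3 → F :=
  ![l 1 * m 2 - l 2 * m 1, l 2 * m 0 - l 0 * m 2, l 0 * m 1 - l 1 * m 0]

/-- Three isotropic vectors whose Gram matrix is skew are dependent: the Gram determinant is
`-det · σ(det)`, and a skew matrix of size three with zero diagonal is singular. -/
theorem det_eq_zero_of_skew (u v w : Fin 3 → F) (huu : herm σ u u = 0) (hvv : herm σ v v = 0)
    (hww : herm σ w w = 0) (huv : herm σ u v + herm σ v u = 0)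
    (huw : herm σ u w + herm σ w u = 0) (hvw : herm σ v w + herm σ w v = 0) :
    det₃ u v w = 0 := by
  have gram : herm σ u u * (herm σ v v * herm σ w w - herm σ v w * herm σ w v)
      - herm σ u v * (herm σ v u * herm σ w w - herm σ v w * herm σ w u)
      + herm σ u w * (herm σ v u * herm σ w v - herm σ v v * herm σ w u)
      = - (det₃ u v w * σ (det₃ u v w)) := by
    simp only [herm, det₃, map_add, map_sub, map_mul]
    ring
  rw [huu, hvv, hww, eq_neg_of_add_eq_zero_right huv, eq_neg_of_add_eq_zero_right huw,
    eq_neg_of_add_eq_zero_right hvw] at gram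
  have h0 : det₃ u v w * σ (det₃ u v w) = 0 := by linear_combination gram
  rcases mul_eq_zero.mp h0 with h | h
  · exact h
  · exact (map_eq_zero σ).mp h

/-- The unital contains no O'Nan configuration: if four lines meet pairwise in isotropic points,
then three of them are concurrent. -/
theorem det_mul_eq_zero (l₁ l₂ l₃ l₄ : Fin 3 → F)
    (h₁₂ : herm σ (meet l₁ l₂) (meet l₁ l₂) = 0) (h₁₃ : herm σ (meet l₁ l₃) (meet l₁ l₃) = 0)
    (h₂₃ : herm σ (meet l₂ l₃) (meet l₂ l₃) = 0) (h₁₄ : herm σ (meet l₁ l₄) (meet l₁ l₄) = 0)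
    (h₂₄ : herm σ (meet l₂ l₄) (meet l₂ l₄) = 0) (h₃₄ : herm σ (meet l₃ l₄) (meet l₃ l₄) = 0) :
    det₃ l₁ l₂ l₃ = 0 ∨ det₃ l₄ l₂ l₃ = 0 ∨ det₃ l₁ l₄ l₃ = 0 ∨ det₃ l₁ l₂ l₄ = 0 := by
  set d := det₃ l₁ l₂ l₃ with hd
  set a := det₃ l₄ l₂ l₃ with ha
  set b := det₃ l₁ l₄ l₃ with hb
  set c := det₃ l₁ l₂ l₄ with hc
  -- After rescaling `lᵢ` by the coefficients of Cramer's rule, the fourth line is the sum of the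
  -- other three, so each of its intersection points is a sum or difference of two of the points
  -- `lᵢ × lⱼ`.
  have cramer : ∀ i, d * l₄ i = a * l₁ i + b * l₂ i + c * l₃ i := by
    intro i
    fin_cases i <;> simp only [hd, ha, hb, hc, det₃] <;> simp <;> ring
  have hsc : ∀ (k : F) (u : Fin 3 → F), herm σ (k • u) (k • u) = k * σ k * herm σ u u := by
    intro k u
    simp only [herm, Pi.smul_apply, smul_eq_mul, map_mul]
    ring
  have hadd : ∀ u v : Fin 3 → F, herm σ (u + v) (u + v)
      = herm σ u u + herm σ v v + (herm σ u v + herm σ v u) := by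
    intro u v
    simp only [herm, Pi.add_apply, map_add]
    ring
  have hneg : ∀ u v : Fin 3 → F, herm σ (u - v) (u - v)
      = herm σ u u + herm σ v v - (herm σ u v + herm σ v u) := by
    intro u v
    simp only [herm, Pi.sub_apply, map_sub]
    ring
  have e₁ : (a * d) • meet l₁ l₄ = (a * b) • meet l₁ l₂ + (a * c) • meet l₁ l₃ := by
    have c0 := cramer 0
    have c1 := cramer 1
    have c2 := cramer 2
    clear_value a b c d
    funext i
    fin_cases i <;> simp [meet]
    · linear_combination a * l₁ 1 * c2 - a * l₁ 2 * c1
    · linear_combination a * l₁ 2 * c0 - a * l₁ 0 * c2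
    · linear_combination a * l₁ 0 * c1 - a * l₁ 1 * c0
  have e₂ : (b * d) • meet l₂ l₄ = (b * c) • meet l₂ l₃ - (a * b) • meet l₁ l₂ := by
    have c0 := cramer 0
    have c1 := cramer 1
    have c2 := cramer 2
    clear_value a b c d
    funext i
    fin_cases i <;> simp [meet]
    · linear_combination b * l₂ 1 * c2 - b * l₂ 2 * c1
    · linear_combination b * l₂ 2 * c0 - b * l₂ 0 * c2
    · linear_combination b * l₂ 0 * c1 - b * l₂ 1 * c0
  have e₃ : (-(c * d)) • meet l₃ l₄ = (a * c) • meet l₁ l₃ + (b * c) • meet l₂ l₃ := by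
    have c0 := cramer 0
    have c1 := cramer 1
    have c2 := cramer 2
    clear_value a b c d
    funext i
    fin_cases i <;> simp [meet]
    · linear_combination -c * l₃ 1 * c2 + c * l₃ 2 * c1
    · linear_combination -c * l₃ 2 * c0 + c * l₃ 0 * c2
    · linear_combination -c * l₃ 0 * c1 + c * l₃ 1 * c0
  have f₁ := hadd ((a * b) • meet l₁ l₂) ((a * c) • meet l₁ l₃)
  have f₂ := hneg ((b * c) • meet l₂ l₃) ((a * b) • meet l₁ l₂)
  have f₃ := hadd ((a * c) • meet l₁ l₃) ((b * c) • meet l₂ l₃)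
  rw [← e₁] at f₁
  rw [← e₂] at f₂
  rw [← e₃] at f₃
  simp only [hsc, h₁₂, h₁₃, h₂₃, h₁₄, h₂₄, h₃₄, mul_zero, zero_add, zero_sub] at f₁ f₂ f₃
  have key := det_eq_zero_of_skew σ ((a * b) • meet l₁ l₂) ((a * c) • meet l₁ l₃)
    ((b * c) • meet l₂ l₃) (by rw [hsc, h₁₂, mul_zero]) (by rw [hsc, h₁₃, mul_zero])
    (by rw [hsc, h₂₃, mul_zero]) f₁.symm (by linear_combination f₂) f₃.symm
  have hdet : det₃ ((a * b) • meet l₁ l₂) ((a * c) • meet l₁ l₃) ((b * c) • meet l₂ l₃)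
      = (a * b * c * d) ^ 2 := by
    clear_value a b c
    simp only [hd, det₃, meet, Pi.smul_apply, smul_eq_mul]
    simp
    ring
  rw [hdet] at key
  have := pow_eq_zero_iff (two_ne_zero) |>.mp key
  simp only [mul_eq_zero] at this
  tauto

/-- The line `Y = a X + b` has coordinate vector `(a, -1, b)`; two such lines through a point
`(x, y)` of the Hermitian curve meet in an isotropic vector, a multiple of `(x, y, 1)`. -/
theorem herm_meet_eq_zero {a b a' b' x y : F} (h : y = a * x + b) (h' : y = a' * x + b')
    (hU : σ y + y = x * σ x) :
    herm σ (meet ![a, -1, b] ![a', -1, b']) (meet ![a, -1, b] ![a', -1, b']) = 0 := by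
  have e : meet ![a, -1, b] ![a', -1, b'] = (a' - a) • ![x, y, 1] := by
    funext i
    fin_cases i <;> simp [meet]
    · linear_combination h' - h
    · linear_combination a * h' - a' * h
    · ring
  rw [e]
  simp [herm]
  linear_combination -(a' - a) * (σ a' - σ a) * hU

/-- If the first two of three linearly dependent lines are not parallel, the third passes through
their common point. -/
theorem concurrent_of_det {a₁ b₁ a₂ b₂ a₃ b₃ x y : F} (h12 : a₁ ≠ a₂)
    (hdet : det₃ ![a₁, -1, b₁] ![a₂, -1, b₂] ![a₃, -1, b₃] = 0)
    (h₁ : y = a₁ * x + b₁) (h₂ : y = a₂ * x + b₂) : y = a₃ * x + b₃ := by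
  have h : (a₁ - a₂) * (y - (a₃ * x + b₃)) = 0 := by
    simp [det₃] at hdet
    linear_combination hdet + (a₃ - a₂) * h₁ + (a₁ - a₃) * h₂
  have := (mul_eq_zero.mp h).resolve_left (sub_ne_zero.mpr h12)
  exact sub_eq_zero.mp this
end Hermitian

/-! ### Counting points on the Hermitian curve -/

section Counts
open Polynomial

theorem card_pow_add_self_le {F : Type*} [Field F] [Fintype F] [DecidableEq F] {p : ℕ}
    (hp : 1 < p) (c : F) :
    (Finset.univ.filter fun y : F => y ^ p + y = c).card ≤ p := by
  have hdeg : (X ^ p + (X - C c) : F[X]).natDegree = p := by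
    rw [natDegree_add_eq_left_of_natDegree_lt, natDegree_X_pow]
    rw [natDegree_X_pow, natDegree_X_sub_C]
    exact hp
  have hne : (X ^ p + (X - C c) : F[X]) ≠ 0 := by
    intro h
    rw [h, natDegree_zero] at hdeg
    omega
  calc _ ≤ (X ^ p + (X - C c) : F[X]).roots.toFinset.card := by
        apply Finset.card_le_card
        intro y hy
        rw [Finset.mem_filter] at hy
        rw [Multiset.mem_toFinset, mem_roots hne]
        simp only [IsRoot, eval_add, eval_sub, eval_pow, eval_X, eval_C]
        linear_combination hy.2
    _ ≤ _ := (Multiset.toFinset_card_le _).trans ((card_roots' _).trans hdeg.le)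

theorem card_pow_eq_le {F : Type*} [Field F] [Fintype F] [DecidableEq F] {n : ℕ}
    (c : F) (hn : 0 < n) :
    (Finset.univ.filter fun y : F => y ^ n = c).card ≤ n := by
  calc _ ≤ (nthRoots n c).toFinset.card := by
        apply Finset.card_le_card
        intro y hy
        rw [Finset.mem_filter] at hy
        rw [Multiset.mem_toFinset, mem_nthRoots hn]
        exact hy.2
    _ ≤ _ := (Multiset.toFinset_card_le _).trans (card_nthRoots _ _)

/-- Every nonzero element of the subfield with `p` elements is the norm of at least `p + 1`
elements: the norm maps `(p + 1) (p - 1)` nonzero elements to at most `p - 1` values, and each fibre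
has at most `p + 1` elements. -/
theorem le_card_norm_fiber {F : Type*} [Field F] [Fintype F] [DecidableEq F] {p : ℕ} (hp : 1 < p)
    (hF : Fintype.card F = p ^ 2) {c : F} (hc : c ≠ 0) (hcp : c ^ p = c) :
    p + 1 ≤ (Finset.univ.filter fun z : F => z ^ (p + 1) = c).card := by
  by_contra! hlt
  set A := Finset.univ.filter fun z : F => z ≠ 0 with hA
  set B := Finset.univ.filter fun d : F => d ^ (p - 1) = 1 with hB
  have hAc : A.card = p ^ 2 - 1 := by
    rw [hA, Finset.filter_ne', Finset.card_erase_of_mem (Finset.mem_univ _), Finset.card_univ, hF]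
  have hsq : p ^ 2 - 1 = (p + 1) * (p - 1) := by simpa using Nat.sq_sub_sq p 1
  have hBc : B.card ≤ p - 1 := card_pow_eq_le _ (by omega)
  have hcB : c ∈ B := by
    rw [hB, Finset.mem_filter]
    refine ⟨Finset.mem_univ _, ?_⟩
    apply mul_right_cancel₀ hc
    rw [← pow_succ, Nat.sub_add_cancel hp.le, hcp, one_mul]
  have hmaps : ∀ z ∈ A, z ^ (p + 1) ∈ B := by
    intro z hz
    rw [hA, Finset.mem_filter] at hz
    rw [hB, Finset.mem_filter]
    refine ⟨Finset.mem_univ _, ?_⟩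
    rw [← pow_mul, ← hsq, ← hF]
    exact FiniteField.pow_card_sub_one_eq_one z hz.2
  have hsum := Finset.card_eq_sum_card_fiberwise hmaps
  have hlt' : ∑ d ∈ B, (A.filter fun z => z ^ (p + 1) = d).card < ∑ d ∈ B, (p + 1) := by
    apply Finset.sum_lt_sum
    · intro d _
      exact (Finset.card_le_card (Finset.filter_subset_filter _ (Finset.subset_univ _))).trans
        (card_pow_eq_le _ (by omega))
    · exact ⟨c, hcB, (Finset.card_le_card
        (Finset.filter_subset_filter _ (Finset.subset_univ _))).trans_lt hlt⟩
  rw [← hsum, hAc, hsq, Finset.sum_const, smul_eq_mul, mul_comm] at hlt'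
  have := Nat.mul_le_mul_right (p + 1) hBc
  omega

end Counts


/-- The points are those of the Hermitian curve, and the lines `Y = a X + b` are those with
`a^(p+1) + b + b^p ≠ 0`, which are exactly the non-tangent ones. -/
theorem unital_of_field (p : ℕ) [hp : Fact p.Prime] {F : Type} [Field F] [Fintype F] [CharP F p]
    (hF : Fintype.card F = p ^ 2) :
    ∃ (P L : Type) (_ : Fintype P) (_ : Fintype L) (pts : L → Finset P),
      Fintype.card P ≤ p ^ 3 ∧ p ^ 4 ≤ Fintype.card L + p ^ 3 ∧ Fintype.card L ≤ p ^ 4 ∧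
      (∀ l, p ≤ (pts l).card) ∧
      (∀ l m, l ≠ m → ∀ x ∈ pts l, x ∈ pts m → ∀ y ∈ pts l, y ∈ pts m → x = y) ∧
      (∀ l : Fin 4 → L, Function.Injective l →
        (∀ i j, i ≠ j → ∃ x, x ∈ pts (l i) ∧ x ∈ pts (l j)) →
        ∃ i j k, i ≠ j ∧ i ≠ k ∧ j ≠ k ∧ ∃ x, x ∈ pts (l i) ∧ x ∈ pts (l j) ∧ x ∈ pts (l k)) := by
  classical
  have hp1 : 1 < p := hp.out.one_lt
  have hpp : ∀ a : F, (a ^ p) ^ p = a := fun a => by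
    rw [← pow_mul, ← sq, ← hF, FiniteField.pow_card]
  have hadd : ∀ a b : F, (a + b) ^ p = a ^ p + b ^ p := fun a b => add_pow_char a b p
  let P := {v : F × F // v.2 ^ p + v.2 = v.1 * v.1 ^ p}
  let L := {v : F × F // ¬ (v.2 ^ p + v.2 = - (v.1 * v.1 ^ p))}
  have hcard : ∀ g : F → F,
      Fintype.card {v : F × F // v.2 ^ p + v.2 = g v.1} ≤ p ^ 3 := by
    intro g
    rw [Fintype.card_subtype, Finset.card_filter, Fintype.sum_prod_type]
    calc _ ≤ ∑ _x : F, p := by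
          apply Finset.sum_le_sum
          intro x _
          rw [← Finset.card_filter]
          exact card_pow_add_self_le hp1 (g x)
      _ = p ^ 3 := by rw [Finset.sum_const, Finset.card_univ, hF, smul_eq_mul]; ring
  have hcardFF : Fintype.card (F × F) = p ^ 4 := by rw [Fintype.card_prod, hF]; ring
  let pts : L → Finset P := fun l => Finset.univ.filter fun v => v.1.2 = l.1.1 * v.1.1 + l.1.2
  have hpts : ∀ (l : L) (v : P), v ∈ pts l ↔ v.1.2 = l.1.1 * v.1.1 + l.1.2 := fun l v => by
    simp [pts]
  -- Distinct lines with a common point have distinct slopes.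
  have slope : ∀ l m : L, l ≠ m → ∀ v, v ∈ pts l → v ∈ pts m → l.1.1 ≠ m.1.1 := by
    intro l m hlm v hl hm h
    rw [hpts] at hl hm
    apply hlm
    refine Subtype.ext (Prod.ext h ?_)
    rw [h] at hl
    linear_combination hm - hl
  refine ⟨P, L, inferInstance, inferInstance, pts, hcard fun x => x * x ^ p, ?_, ?_, ?_, ?_, ?_⟩
  · have h1 := Fintype.card_subtype_compl (fun v : F × F => v.2 ^ p + v.2 = - (v.1 * v.1 ^ p))
    have h2 := hcard fun x => - (x * x ^ p)
    rw [hcardFF] at h1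
    change p ^ 4 ≤ Fintype.card {v : F × F // ¬ (v.2 ^ p + v.2 = - (v.1 * v.1 ^ p))} + p ^ 3
    omega
  · exact (Fintype.card_subtype_le _).trans hcardFF.le
  · rintro ⟨⟨a, b⟩, hl⟩
    have hc : a * a ^ p + b + b ^ p ≠ 0 := fun h => hl (by linear_combination h)
    have hcp : (a * a ^ p + b + b ^ p) ^ p = a * a ^ p + b + b ^ p := by
      rw [hadd, hadd, mul_pow, hpp, hpp]
      ring
    have hle := le_card_norm_fiber hp1 hF hc hcp
    refine (Nat.le_succ p).trans (hle.trans ?_)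
    -- The points of the line `Y = a X + b` have `X = z + a ^ p` with `z` of the given norm.
    have hon : ∀ z : F, z ^ (p + 1) = a * a ^ p + b + b ^ p →
        (a * (z + a ^ p) + b) ^ p + (a * (z + a ^ p) + b) = (z + a ^ p) * (z + a ^ p) ^ p := by
      intro z hz
      rw [hadd, mul_pow, hadd, hpp]
      linear_combination -hz
    refine Finset.card_le_card_of_injOn
      (fun z => if hz : z ^ (p + 1) = a * a ^ p + b + b ^ p then
        (⟨(z + a ^ p, a * (z + a ^ p) + b), hon z hz⟩ : P)
        else ⟨(0, 0), by simp [hp.out.ne_zero]⟩) ?_ ?_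
    · intro z hz
      have hz' := (Finset.mem_filter.mp hz).2
      simp only [dif_pos hz']
      exact (hpts _ _).mpr rfl
    · intro z hz w hw hzw
      have hz' := (Finset.mem_filter.mp hz).2
      have hw' := (Finset.mem_filter.mp hw).2
      simp only [dif_pos hz', dif_pos hw'] at hzw
      have := congrArg (fun v : P => v.1.1) hzw
      simpa using this
  · intro l m hlm x hxl hxm y hyl hym
    have hs := slope l m hlm x hxl hxm
    rw [hpts] at hxl hxm hyl hym
    have h0 : (l.1.1 - m.1.1) * (x.1.1 - y.1.1) = 0 := by
      linear_combination hxm - hxl - hym + hyl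
    have h1 : x.1.1 = y.1.1 :=
      sub_eq_zero.mp ((mul_eq_zero.mp h0).resolve_left (sub_ne_zero.mpr hs))
    refine Subtype.ext (Prod.ext h1 ?_)
    rw [hxl, hyl, h1]
  · intro l hl hmeet
    let v : Fin 4 → Fin 3 → F := fun i => ![(l i).1.1, -1, (l i).1.2]
    have hiso : ∀ i j, i ≠ j → herm (frobenius F p) (meet (v i) (v j)) (meet (v i) (v j)) = 0 := by
      intro i j hij
      obtain ⟨x, hxi, hxj⟩ := hmeet i j hij
      exact herm_meet_eq_zero _ ((hpts _ _).mp hxi) ((hpts _ _).mp hxj) x.2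
    have hconc : ∀ i j k, i ≠ j → i ≠ k → j ≠ k → det₃ (v i) (v j) (v k) = 0 →
        ∃ i j k, i ≠ j ∧ i ≠ k ∧ j ≠ k ∧
          ∃ x, x ∈ pts (l i) ∧ x ∈ pts (l j) ∧ x ∈ pts (l k) := by
      intro i j k hij hik hjk hdet
      obtain ⟨x, hxi, hxj⟩ := hmeet i j hij
      refine ⟨i, j, k, hij, hik, hjk, x, hxi, hxj, (hpts _ _).mpr ?_⟩
      exact concurrent_of_det (slope _ _ (fun h => hij (hl h)) x hxi hxj) hdet
        ((hpts _ _).mp hxi) ((hpts _ _).mp hxj)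
    rcases det_mul_eq_zero (frobenius F p) (v 0) (v 1) (v 2) (v 3) (hiso _ _ (by decide))
      (hiso _ _ (by decide)) (hiso _ _ (by decide)) (hiso _ _ (by decide))
      (hiso _ _ (by decide)) (hiso _ _ (by decide)) with h | h | h | h <;>
    exact hconc _ _ _ (by decide) (by decide) (by decide) h

theorem exists_unital (p : ℕ) (hp : p.Prime) :
    ∃ (P L : Type) (_ : Fintype P) (_ : Fintype L) (pts : L → Finset P),
      Fintype.card P ≤ p ^ 3 ∧ p ^ 4 ≤ Fintype.card L + p ^ 3 ∧ Fintype.card L ≤ p ^ 4 ∧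
      (∀ l, p ≤ (pts l).card) ∧
      (∀ l m, l ≠ m → ∀ x ∈ pts l, x ∈ pts m → ∀ y ∈ pts l, y ∈ pts m → x = y) ∧
      (∀ l : Fin 4 → L, Function.Injective l →
        (∀ i j, i ≠ j → ∃ x, x ∈ pts (l i) ∧ x ∈ pts (l j)) →
        ∃ i j k, i ≠ j ∧ i ≠ k ∧ j ≠ k ∧
          ∃ x, x ∈ pts (l i) ∧ x ∈ pts (l j) ∧ x ∈ pts (l k)) := by
  have := Fact.mk hp
  let _ : Fintype (GaloisField p 2) := Fintype.ofFinite _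
  exact unital_of_field p (F := GaloisField p 2)
    (by rw [← Nat.card_eq_fintype_card, GaloisField.card p 2 two_ne_zero])

/-! ### Random colourings of flags -/

section Coloring

variable {P L : Type} [Fintype P] [Fintype L] [DecidableEq P] [DecidableEq L]

/-- The number of lines of `X` through the point `x` that have colour `b` at `x`. -/
def colorCount (pts : L → Finset P) (f : P × L → Bool) (X : Finset L) (x : P) (b : Bool) : ℕ :=
  (X.filter fun l => x ∈ pts l ∧ f (x, l) = b).card


/-- The number of flags with line in `X` that carry the less frequent colour at their point. -/
def minority (pts : L → Finset P) (f : P × L → Bool) (X : Finset L) : ℕ :=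
  ∑ x, min (colorCount pts f X x true) (colorCount pts f X x false)

/-- The incident point-line pairs with line in `X`. -/
def flags (pts : L → Finset P) (X : Finset L) : Finset (P × L) :=
  Finset.univ.filter fun v => v.2 ∈ X ∧ v.1 ∈ pts v.2

theorem le_card_flags {pts : L → Finset P} {q : ℕ} (hpts : ∀ l, q ≤ (pts l).card) (X : Finset L) :
    q * X.card ≤ (flags pts X).card := by
  have h : (flags pts X).card = ∑ l ∈ X, (pts l).card := by
    rw [flags, Finset.card_filter, Fintype.sum_prod_type_right,
      ← Finset.sum_filter_add_sum_filter_not Finset.univ (· ∈ X)]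
    simp +contextual
  rw [h, mul_comm, ← smul_eq_mul, ← Finset.sum_const]
  exact Finset.sum_le_sum fun l _ => hpts l

/-- The sum, over all choices `g` of a colour at each point, of `z` to the number of flags of `X`
whose colour agrees with `g`. For `z < 1` the choice of the minority colours dominates. -/
noncomputable def flipWeight (pts : L → Finset P) (z : ℝ) (X : Finset L) (f : P × L → Bool) : ℝ :=
  ∑ g : P → Bool, ∏ v, if (v.2 ∈ X ∧ v.1 ∈ pts v.2) ∧ f v = g v.1 then z else 1

/-- For fixed `g` the colours of the flags are independent, so the sum over `f` factors. -/
theorem sum_flipWeight (pts : L → Finset P) (z : ℝ) (X : Finset L) :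
    ∑ f : P × L → Bool, flipWeight pts z X f =
      2 ^ Fintype.card P * (2 ^ Fintype.card (P × L) * ((1 + z) / 2) ^ (flags pts X).card) := by
  unfold flipWeight
  rw [Finset.sum_comm]
  have h : ∀ g : P → Bool, ∑ f : P × L → Bool,
      ∏ v, (if (v.2 ∈ X ∧ v.1 ∈ pts v.2) ∧ f v = g v.1 then z else 1)
      = 2 ^ Fintype.card (P × L) * ((1 + z) / 2) ^ (flags pts X).card := by
    intro g
    have h1 := Finset.prod_univ_sum (fun _ : P × L => (Finset.univ : Finset Bool))
      (fun v b => if (v.2 ∈ X ∧ v.1 ∈ pts v.2) ∧ b = g v.1 then z else (1 : ℝ))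
    rw [Fintype.piFinset_univ] at h1
    rw [← h1]
    have h2 : ∀ v : P × L, ∑ b : Bool,
        (if (v.2 ∈ X ∧ v.1 ∈ pts v.2) ∧ b = g v.1 then z else (1 : ℝ))
        = 2 * (if v.2 ∈ X ∧ v.1 ∈ pts v.2 then (1 + z) / 2 else 1) := by
      intro v
      rw [Fintype.sum_bool]
      by_cases hv : v.2 ∈ X ∧ v.1 ∈ pts v.2
      · cases g v.1 <;> simp [hv] <;> ring
      · simp only [hv, false_and, if_false]
        norm_num
    rw [Finset.prod_congr rfl fun v _ => h2 v, Finset.prod_mul_distrib, Finset.prod_const,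
      Finset.prod_ite, Finset.prod_const, Finset.prod_const_one, mul_one, Finset.card_univ, flags]
  rw [Finset.sum_congr rfl fun g _ => h g, Finset.sum_const, Finset.card_univ, Fintype.card_fun,
    Fintype.card_bool, nsmul_eq_mul]
  push_cast
  rfl

theorem le_flipWeight (pts : L → Finset P) {z : ℝ} (hz : 0 ≤ z) (X : Finset L)
    (f : P × L → Bool) : z ^ minority pts f X ≤ flipWeight pts z X f := by
  let g : P → Bool := fun x =>
    if colorCount pts f X x true ≤ colorCount pts f X x false then true else false
  have hg : ∏ v : P × L, (if (v.2 ∈ X ∧ v.1 ∈ pts v.2) ∧ f v = g v.1 then z else 1)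
      = z ^ minority pts f X := by
    rw [Fintype.prod_prod_type, minority, ← Finset.prod_pow_eq_pow_sum]
    apply Finset.prod_congr rfl
    intro x _
    rw [Finset.prod_ite, Finset.prod_const, Finset.prod_const_one, mul_one]
    congr 1
    have : (Finset.univ.filter fun l => (l ∈ X ∧ x ∈ pts l) ∧ f (x, l) = g x).card
        = colorCount pts f X x (g x) := by
      unfold colorCount
      congr 1
      ext l
      simp [and_assoc]
    rw [this]
    by_cases hc : colorCount pts f X x true ≤ colorCount pts f X x false
    · simp [g, hc]
    · simp only [g, hc, if_false]
      rw [min_eq_right (by omega)]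
  rw [← hg]
  unfold flipWeight
  refine Finset.single_le_sum (f := fun g : P → Bool => ∏ v : P × L,
    (if (v.2 ∈ X ∧ v.1 ∈ pts v.2) ∧ f v = g v.1 then z else 1)) (fun g _ => ?_) (Finset.mem_univ g)
  apply Finset.prod_nonneg
  intro v _
  split_ifs <;> linarith

/-- Some colouring is balanced on every large set `X` of lines: a proportion of at least `1 / 16`
of `q |X|` flags carries the minority colour. -/
theorem exists_coloring (pts : L → Finset P) {q : ℕ} (hq0 : 0 < q)
    (hP : Fintype.card P ≤ q ^ 3)
    (hpts : ∀ l, q ≤ (pts l).card) (hL : Fintype.card L ≤ q ^ 4)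
    (hq : (1 + (5 / 6 : ℝ) ^ q) ^ (q ^ 4) < 2) :
    ∃ f : P × L → Bool, ∀ X : Finset L, 4 * q ^ 2 ≤ X.card →
      q * X.card ≤ 16 * minority pts f X := by
  by_contra! hbad
  set 𝒳 : Finset (Finset L) := Finset.univ.filter fun X => 4 * q ^ 2 ≤ X.card with h𝒳
  -- With `z = y ^ 16`, a set violating the claim contributes at least `1` to the sum below, while
  -- each flag contributes a factor `(1 + z) / (2 y) ≤ 2 / 3` on average.
  set y : ℝ := 9 / 10 with hy
  set z : ℝ := y ^ 16 with hz
  have hy0 : 0 < y := by norm_num [hy]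
  have hz0 : 0 ≤ z := by positivity
  have hratio : (1 + z) / 2 * y⁻¹ ≤ 2 / 3 := by norm_num [hz, hy]
  have lower : ∀ f : P × L → Bool,
      1 ≤ ∑ X ∈ 𝒳, flipWeight pts z X f * y⁻¹ ^ (flags pts X).card := by
    intro f
    obtain ⟨X, hX, hlt⟩ := hbad f
    have h1 : 1 ≤ flipWeight pts z X f * y⁻¹ ^ (flags pts X).card := by
      have h2 : y ^ (flags pts X).card ≤ flipWeight pts z X f := by
        refine le_trans ?_ (le_flipWeight pts hz0 X f)
        rw [hz, ← pow_mul]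
        exact pow_le_pow_of_le_one hy0.le (by norm_num [hy])
          (hlt.le.trans (le_card_flags hpts X))
      rw [inv_pow, ← div_eq_mul_inv, le_div_iff₀ (by positivity), one_mul]
      exact h2
    refine h1.trans (Finset.single_le_sum
      (f := fun X => flipWeight pts z X f * y⁻¹ ^ (flags pts X).card) (fun X _ => ?_)
      (by simp [h𝒳, hX]))
    exact mul_nonneg (le_trans (by positivity) (le_flipWeight pts hz0 X f)) (by positivity)
  have upper : ∀ X ∈ 𝒳, ∑ f : P × L → Bool, flipWeight pts z X f * y⁻¹ ^ (flags pts X).card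
      ≤ 2 ^ Fintype.card (P × L) * ((5 / 6 : ℝ) ^ q) ^ X.card := by
    intro X hX
    have hXc : 4 * q ^ 2 ≤ X.card := by simpa [h𝒳] using hX
    rw [← Finset.sum_mul, sum_flipWeight]
    have e1 : (2 : ℝ) ^ Fintype.card P * (2 ^ Fintype.card (P × L) *
        ((1 + z) / 2) ^ (flags pts X).card) * y⁻¹ ^ (flags pts X).card
        = 2 ^ Fintype.card (P × L) * (2 ^ Fintype.card P *
          ((1 + z) / 2 * y⁻¹) ^ (flags pts X).card) := by
      rw [mul_pow]; ring
    rw [e1]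
    refine mul_le_mul_of_nonneg_left ?_ (by positivity)
    calc (2 : ℝ) ^ Fintype.card P * ((1 + z) / 2 * y⁻¹) ^ (flags pts X).card
        ≤ 2 ^ (q ^ 3) * ((5 / 6) ^ 2) ^ (q * X.card) := by
          refine mul_le_mul (pow_le_pow_right₀ (by norm_num) hP) ?_ (by positivity) (by positivity)
          calc _ ≤ (2 / 3 : ℝ) ^ (flags pts X).card := pow_le_pow_left₀ (by positivity) hratio _
            _ ≤ (2 / 3 : ℝ) ^ (q * X.card) :=
              pow_le_pow_of_le_one (by norm_num) (by norm_num) (le_card_flags hpts X)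
            _ ≤ _ := pow_le_pow_left₀ (by norm_num) (by norm_num) _
      _ = (2 ^ (q ^ 3) * (5 / 6) ^ (q * X.card)) * ((5 / 6) ^ q) ^ X.card := by
          rw [← pow_mul, ← pow_mul, mul_comm 2 (q * X.card), pow_mul _ _ 2]; ring
      _ ≤ 1 * ((5 / 6) ^ q) ^ X.card := by
          refine mul_le_mul_of_nonneg_right ?_ (by positivity)
          calc (2 : ℝ) ^ (q ^ 3) * (5 / 6) ^ (q * X.card)
              ≤ 2 ^ (q ^ 3) * (5 / 6) ^ (4 * q ^ 3) := by
                refine mul_le_mul_of_nonneg_left ?_ (by positivity)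
                refine pow_le_pow_of_le_one (by norm_num) (by norm_num) ?_
                calc 4 * q ^ 3 = q * (4 * q ^ 2) := by ring
                  _ ≤ _ := Nat.mul_le_mul_left _ hXc
            _ = (2 * (5 / 6) ^ 4) ^ (q ^ 3) := by rw [mul_pow, pow_mul]
            _ ≤ 1 := pow_le_one₀ (by norm_num) (by norm_num)
      _ = _ := one_mul _
  have hsum : (2 : ℝ) ^ Fintype.card (P × L) ≤
      ∑ f : P × L → Bool, ∑ X ∈ 𝒳, flipWeight pts z X f * y⁻¹ ^ (flags pts X).card := by
    have := Finset.sum_le_sum fun f (_ : f ∈ (Finset.univ : Finset (P × L → Bool))) => lower f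
    rw [Finset.sum_const, Finset.card_univ, Fintype.card_fun, Fintype.card_bool] at this
    simpa using this
  rw [Finset.sum_comm] at hsum
  have h2 := hsum.trans (Finset.sum_le_sum upper)
  rw [← Finset.mul_sum] at h2
  have h3 : 1 ≤ ∑ X ∈ 𝒳, ((5 / 6 : ℝ) ^ q) ^ X.card := by
    have hpos : (0 : ℝ) < 2 ^ Fintype.card (P × L) := by positivity
    nlinarith
  have h4 : ∑ X ∈ 𝒳, ((5 / 6 : ℝ) ^ q) ^ X.card + 1 ≤ (1 + (5 / 6 : ℝ) ^ q) ^ Fintype.card L := by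
    have h5 := Finset.prod_one_add (f := fun _ : L => (5 / 6 : ℝ) ^ q) (s := Finset.univ)
    rw [Finset.prod_const, Finset.card_univ] at h5
    rw [h5]
    have h6 : ∅ ∉ 𝒳 := by simp [h𝒳, hq0.ne']
    calc _ = ∑ X ∈ insert ∅ 𝒳, ((5 / 6 : ℝ) ^ q) ^ X.card := by
          rw [Finset.sum_insert h6]; simp [add_comm]
      _ ≤ ∑ X ∈ Finset.univ.powerset, ((5 / 6 : ℝ) ^ q) ^ X.card :=
          Finset.sum_le_sum_of_subset_of_nonneg (by intro X _; simp) (fun _ _ _ => by positivity)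
      _ = _ := Finset.sum_congr rfl fun X _ => by rw [Finset.prod_const]
  have h7 : (1 + (5 / 6 : ℝ) ^ q) ^ Fintype.card L ≤ (1 + (5 / 6 : ℝ) ^ q) ^ (q ^ 4) :=
    pow_le_pow_right₀ (by simp; positivity) hL
  linarith

end Coloring
/-! ### The graph of lines -/

section Graph

variable {P L : Type}

/-- Two lines are adjacent when they have a common point at which `f` gives them different
colours. -/
def bichromaticGraph (pts : L → Finset P) (f : P × L → Bool) : SimpleGraph L where
  Adj l m := l ≠ m ∧ ∃ x, x ∈ pts l ∧ x ∈ pts m ∧ f (x, l) ≠ f (x, m)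
  symm := ⟨fun _ _ ⟨h, x, hl, hm, hf⟩ => ⟨h.symm, x, hm, hl, hf.symm⟩⟩
  loopless := ⟨fun _ h => h.1 rfl⟩

theorem bichromaticGraph_cliqueFree {pts : L → Finset P} (f : P × L → Bool)
    (hlin : ∀ l m, l ≠ m → ∀ x ∈ pts l, x ∈ pts m → ∀ y ∈ pts l, y ∈ pts m → x = y)
    (honan : ∀ l : Fin 4 → L, Function.Injective l →
      (∀ i j, i ≠ j → ∃ x, x ∈ pts (l i) ∧ x ∈ pts (l j)) →
      ∃ i j k, i ≠ j ∧ i ≠ k ∧ j ≠ k ∧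
        ∃ x, x ∈ pts (l i) ∧ x ∈ pts (l j) ∧ x ∈ pts (l k)) :
    (bichromaticGraph pts f).CliqueFree 4 := by
  by_contra hK
  obtain ⟨φ⟩ := SimpleGraph.not_cliqueFree_iff_top_isContained 4 |>.mp hK
  have hadj : ∀ i j, i ≠ j → (bichromaticGraph pts f).Adj (φ i) (φ j) := fun i j hij =>
    φ.toHom.map_adj hij
  obtain ⟨i, j, k, hij, hik, hjk, x, hi, hj, hk⟩ := honan φ φ.injective fun i j hij => by
    obtain ⟨-, x, hi, hj, -⟩ := hadj i j hij
    exact ⟨x, hi, hj⟩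
  have hne : ∀ i j, i ≠ j → x ∈ pts (φ i) → x ∈ pts (φ j) → f (x, φ i) ≠ f (x, φ j) := by
    intro i j hij hi hj
    obtain ⟨h, y, hyi, hyj, hf⟩ := hadj i j hij
    rwa [hlin _ _ h x hi hj y hyi hyj]
  have h1 := hne i j hij hi hj
  have h2 := hne i k hik hi hk
  have h3 := hne j k hjk hj hk
  revert h1 h2 h3
  cases f (x, φ i) <;> cases f (x, φ j) <;> cases f (x, φ k) <;> simp

open Classical in
/-- On a set of lines where the colouring is balanced, the average degree is large, by
Cauchy-Schwarz over the points. -/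
theorem exists_large_degree [Fintype P] [Fintype L] {pts : L → Finset P} {f : P × L → Bool}
    {q : ℕ} (hq : 0 < q) (hP : Fintype.card P ≤ q ^ 3)
    (hlin : ∀ l m, l ≠ m → ∀ x ∈ pts l, x ∈ pts m → ∀ y ∈ pts l, y ∈ pts m → x = y)
    {X : Finset L} (hX : X.Nonempty) (hmin : q * X.card ≤ 16 * minority pts f X) :
    ∃ v ∈ X, X.card ≤ 256 * q * (X.filter fun w => (bichromaticGraph pts f).Adj v w).card := by
  by_contra! hsmall
  set d : L → ℕ := fun v => (X.filter fun w => (bichromaticGraph pts f).Adj v w).card with hd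
  set c : P → Bool → Finset L := fun x b => X.filter fun l => x ∈ pts l ∧ f (x, l) = b with hc
  set μ : P → ℕ := fun x => min (c x true).card (c x false).card with hμ
  have hmin' : minority pts f X = ∑ x, μ x := rfl
  have hedges : ∑ x, μ x ^ 2 ≤ ∑ v ∈ X, d v := by
    calc ∑ x, μ x ^ 2 ≤ ∑ x, (c x true ×ˢ c x false).card := by
          apply Finset.sum_le_sum
          intro x _
          rw [Finset.card_product, sq]
          exact Nat.mul_le_mul (min_le_left _ _) (min_le_right _ _)
      _ = (Finset.univ.sigma fun x => c x true ×ˢ c x false).card := (Finset.card_sigma _ _).symm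
      _ ≤ (X.sigma fun v => X.filter fun w => (bichromaticGraph pts f).Adj v w).card := by
          refine Finset.card_le_card_of_injOn (fun t => ⟨t.2.1, t.2.2⟩) ?_ ?_
          · rintro ⟨x, l, m⟩ ht
            simp only [hc, Finset.coe_sigma, Set.mem_sigma_iff, Finset.mem_coe, Finset.mem_univ,
              Finset.mem_product, Finset.mem_filter, true_and] at ht ⊢
            obtain ⟨⟨hl, hxl, hfl⟩, hm, hxm, hfm⟩ := ht
            refine ⟨hl, hm, ?_, x, hxl, hxm, by simp [hfl, hfm]⟩
            rintro rfl
            simp [hfl] at hfm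
          · rintro ⟨x, l, m⟩ ht ⟨x', l', m'⟩ ht' heq
            simp only [hc, Finset.coe_sigma, Set.mem_sigma_iff, Finset.mem_coe, Finset.mem_univ,
              Finset.mem_product, Finset.mem_filter, true_and] at ht ht'
            simp only [Sigma.mk.injEq, heq_eq_eq] at heq
            obtain ⟨rfl, rfl⟩ := heq
            have hlm : l ≠ m := by
              rintro rfl
              simp [ht.1.2.2] at ht
            rw [hlin l m hlm x ht.1.2.1 ht.2.2.1 x' ht'.1.2.1 ht'.2.2.1]
      _ = ∑ v ∈ X, d v := Finset.card_sigma _ _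
  have hcs : (∑ x, μ x) ^ 2 ≤ Fintype.card P * ∑ x, μ x ^ 2 := by
    simpa using sq_sum_le_card_mul_sum_sq (s := (Finset.univ : Finset P)) (f := μ)
  have hupper : 256 * q * ∑ v ∈ X, d v < X.card * X.card := by
    rw [Finset.mul_sum, ← smul_eq_mul (X.card), ← Finset.sum_const]
    exact Finset.sum_lt_sum_of_nonempty hX hsmall
  have h1 : (q * X.card) ^ 2 ≤ q ^ 2 * (256 * q * ∑ v ∈ X, d v) := by
    calc (q * X.card) ^ 2 ≤ (16 * ∑ x, μ x) ^ 2 := Nat.pow_le_pow_left hmin 2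
      _ = 256 * (∑ x, μ x) ^ 2 := by ring
      _ ≤ 256 * (q ^ 3 * ∑ v ∈ X, d v) :=
          Nat.mul_le_mul_left _ (hcs.trans (Nat.mul_le_mul hP hedges))
      _ = _ := by ring
  have h2 : q ^ 2 * (256 * q * ∑ v ∈ X, d v) < q ^ 2 * (X.card * X.card) :=
    Nat.mul_lt_mul_of_pos_left hupper (by positivity)
  nlinarith

end Graph

/-! ### Counting independent sets -/

section Containers

open Classical in
/-- The independence polynomial of `G` restricted to `A`, evaluated at `z`. -/
noncomputable def indepPoly {V : Type} (G : SimpleGraph V) (z : ℝ) (A : Finset V) : ℝ :=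
  ∑ I ∈ A.powerset, if IsIndepFinset G I then z ^ I.card else 0

theorem indepPoly_le_pow {V : Type} (G : SimpleGraph V) {z : ℝ} (hz : 0 ≤ z) (A : Finset V) :
    indepPoly G z A ≤ (1 + z) ^ A.card := by
  classical
  have h := Finset.prod_one_add (f := fun _ : V => z) (s := A)
  rw [Finset.prod_const] at h
  rw [h]
  apply Finset.sum_le_sum
  intro I _
  rw [Finset.prod_const]
  split_ifs
  · exact le_rfl
  · positivity

open Classical in
/-- Independent sets either avoid `v`, or consist of `v` and non-neighbours of `v`. -/
theorem indepPoly_le_erase {V : Type} (G : SimpleGraph V) {z : ℝ} (hz : 0 ≤ z) {A : Finset V}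
    {v : V} (hv : v ∈ A) :
    indepPoly G z A ≤ indepPoly G z (A.erase v)
      + z * indepPoly G z ((A.erase v).filter fun w => ¬ G.Adj v w) := by
  conv_lhs => rw [← Finset.insert_erase hv]
  unfold indepPoly
  rw [Finset.sum_powerset_insert (Finset.notMem_erase v A), Finset.mul_sum]
  refine add_le_add le_rfl ?_
  have hsub : ((A.erase v).filter fun w => ¬ G.Adj v w).powerset ⊆ (A.erase v).powerset :=
    Finset.powerset_mono.mpr (Finset.filter_subset _ _)
  rw [← Finset.sum_subset_zero_on_sdiff hsub (f := fun I => if IsIndepFinset G (insert v I) then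
    z ^ (insert v I).card else 0) (g := fun I => if IsIndepFinset G (insert v I) then
    z ^ (insert v I).card else 0) ?_ (fun _ _ => rfl)]
  · apply Finset.sum_le_sum
    intro I hI
    have hvI : v ∉ I := fun h => by simpa using Finset.mem_powerset.mp hI h
    rw [Finset.card_insert_of_notMem hvI]
    by_cases hind : IsIndepFinset G (insert v I)
    · have : IsIndepFinset G I := fun a ha b hb =>
        hind a (Finset.mem_insert_of_mem ha) b (Finset.mem_insert_of_mem hb)
      rw [if_pos hind, if_pos this, pow_succ']
    · rw [if_neg hind]
      split_ifs <;> positivity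
  · intro I hI
    rw [Finset.mem_sdiff, Finset.mem_powerset, Finset.mem_powerset] at hI
    refine if_neg fun hind => hI.2 fun w hw => Finset.mem_filter.mpr ⟨hI.1 hw, ?_⟩
    exact hind v (Finset.mem_insert_self _ _) w (Finset.mem_insert_of_mem hw)

/-- The Kleitman-Winston bound: if every set `A` of more than `R` vertices has a vertex with at
least `α |A|` neighbours in `A`, then choosing such a vertex shrinks the set of available vertices
by the factor `1 - α`, which can happen at most `k` times before `R` vertices are left. -/
theorem indepPoly_le {V : Type} (G : SimpleGraph V) {z α : ℝ} (hz : 0 ≤ z) (hα : α ≤ 1) {R : ℕ}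
    (hdeg : ∀ A : Finset V, R < A.card → ∃ v ∈ A, ∃ B ⊆ A, (∀ w ∈ B, G.Adj v w) ∧
      α * A.card ≤ B.card) (A : Finset V) (k : ℕ) (hk : A.card * (1 - α) ^ k ≤ R) :
    indepPoly G z A ≤ (1 + z) ^ R * (1 + A.card * z) ^ k := by
  classical
  induction hn : A.card using Nat.strong_induction_on generalizing A k with
  | _ n ih =>
    subst hn
    by_cases hR : A.card ≤ R
    · have h1 : (1 : ℝ) ≤ (1 + A.card * z) ^ k := one_le_pow₀ (by simp; positivity)
      calc indepPoly G z A ≤ (1 + z) ^ A.card := indepPoly_le_pow G hz A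
        _ ≤ (1 + z) ^ R := pow_le_pow_right₀ (by linarith) hR
        _ ≤ _ := le_mul_of_one_le_right (by positivity) h1
    · push Not at hR
      obtain ⟨k, rfl⟩ : ∃ j, k = j + 1 := by
        refine Nat.exists_eq_succ_of_ne_zero ?_
        rintro rfl
        rw [pow_zero, mul_one] at hk
        have : A.card ≤ R := by exact_mod_cast hk
        omega
      obtain ⟨v, hv, B, hBA, hB, hBc⟩ := hdeg A hR
      have hα' : 0 ≤ 1 - α := by linarith
      set A₁ := A.erase v with hA₁
      set A₂ := A₁.filter fun w => ¬ G.Adj v w with hA₂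
      have hpos : 0 < A.card := by omega
      have hc₁ : A₁.card + 1 = A.card := by
        rw [hA₁, Finset.card_erase_of_mem hv]; omega
      have hc₂ : A₂.card ≤ A₁.card := Finset.card_le_card (Finset.filter_subset _ _)
      have hc₂' : (A₂.card : ℝ) ≤ (1 - α) * A.card := by
        have hdisj : Disjoint A₂ B := Finset.disjoint_left.mpr fun w hw hwB =>
          (Finset.mem_filter.mp hw).2 (hB w hwB)
        have hsub : A₂ ∪ B ⊆ A := Finset.union_subset
          ((Finset.filter_subset _ _).trans (Finset.erase_subset _ _)) hBA
        have := Finset.card_le_card hsub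
        rw [Finset.card_union_of_disjoint hdisj] at this
        have h' : (A₂.card : ℝ) + B.card ≤ A.card := by exact_mod_cast this
        linarith
      have hc₁R : (A₁.card : ℝ) + 1 = A.card := by exact_mod_cast hc₁
      have hc₂R : (A₂.card : ℝ) ≤ A₁.card := by exact_mod_cast hc₂
      have i₁ := ih A₁.card (by omega) A₁ (k + 1)
        (le_trans (mul_le_mul_of_nonneg_right (by linarith) (by positivity)) hk) rfl
      have i₂ := ih A₂.card (by omega) A₂ k (by
        refine le_trans ?_ hk
        rw [pow_succ']
        calc (A₂.card : ℝ) * (1 - α) ^ k ≤ ((1 - α) * A.card) * (1 - α) ^ k :=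
              mul_le_mul_of_nonneg_right hc₂' (by positivity)
          _ = _ := by ring) rfl
      have i₂' : indepPoly G z A₂ ≤ (1 + z) ^ R * (1 + A₁.card * z) ^ k := by
        refine i₂.trans (mul_le_mul_of_nonneg_left ?_ (by positivity))
        exact pow_le_pow_left₀ (by positivity)
          (by linarith [mul_le_mul_of_nonneg_right hc₂R hz]) _
      calc indepPoly G z A ≤ indepPoly G z A₁ + z * indepPoly G z A₂ :=
            indepPoly_le_erase G hz hv
        _ ≤ (1 + z) ^ R * (1 + A₁.card * z) ^ (k + 1)
            + z * ((1 + z) ^ R * (1 + A₁.card * z) ^ k) :=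
            add_le_add i₁ (mul_le_mul_of_nonneg_left i₂' hz)
        _ = (1 + z) ^ R * ((1 + A₁.card * z) ^ k * (1 + A.card * z)) := by
            rw [← hc₁R]; ring
        _ ≤ (1 + z) ^ R * ((1 + A.card * z) ^ k * (1 + A.card * z)) := by
            refine mul_le_mul_of_nonneg_left (mul_le_mul_of_nonneg_right ?_ ?_) (by positivity)
            · exact pow_le_pow_left₀ (by positivity) (by nlinarith) _
            · positivity
        _ = _ := by ring

open Classical in
/-- The independent sets of size `t`. -/
noncomputable def indepSets {V : Type} [Fintype V] (G : SimpleGraph V) (t : ℕ) :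
    Finset (Finset V) :=
  Finset.univ.filter fun I => I.card = t ∧ IsIndepFinset G I

theorem card_indepSets_mul_le {V : Type} [Fintype V] (G : SimpleGraph V) {z : ℝ} (hz : 0 ≤ z)
    (t : ℕ) : (indepSets G t).card * z ^ t ≤ indepPoly G z Finset.univ := by
  classical
  unfold indepPoly
  rw [← Finset.sum_filter, ← nsmul_eq_mul, ← Finset.sum_const]
  calc ∑ _I ∈ indepSets G t, z ^ t = ∑ I ∈ indepSets G t, z ^ I.card := by
        apply Finset.sum_congr rfl
        intro I hI
        rw [(Finset.mem_filter.mp hI).2.1]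
    _ ≤ _ := by
        refine Finset.sum_le_sum_of_subset_of_nonneg ?_ fun _ _ _ => by positivity
        intro I hI
        have := (Finset.mem_filter.mp hI).2.2
        simp [this]

/-- If the number of independent `t`-sets is less than `s ^ (t - 1)`, then some colouring of the
vertices with `s` colours has no monochromatic one, and `W` is its largest colour class. -/
theorem exists_sparse_subset {V : Type} [Fintype V] (G : SimpleGraph V) {t s : ℕ} (hs : 0 < s)
    (ht : (indepSets G t).card * s < s ^ t) :
    ∃ W : Finset V, Fintype.card V ≤ s * W.card ∧ ∀ I ⊆ W, I.card = t → ¬ IsIndepFinset G I := by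
  classical
  -- Colourings for which a given set is monochromatic of a given colour.
  let M : Finset V → Fin s → Finset (V → Fin s) := fun I c =>
    Fintype.piFinset fun v => if v ∈ I then {c} else Finset.univ
  have hM : ∀ I ∈ indepSets G t, ∀ c, (M I c).card * s ^ t = s ^ Fintype.card V := by
    intro I hI c
    have hIc : I.card = t := (Finset.mem_filter.mp hI).2.1
    have hle : I.card ≤ Fintype.card V := Finset.card_le_univ I
    simp only [M, Fintype.card_piFinset]
    have : ∀ v, (if v ∈ I then ({c} : Finset (Fin s)) else Finset.univ).card
        = if v ∈ I then 1 else s := fun v => by split_ifs <;> simp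
    rw [Finset.prod_congr rfl fun v _ => this v, Finset.prod_ite, Finset.prod_const_one, one_mul,
      Finset.prod_const, ← Finset.compl_filter, Finset.card_compl, Finset.filter_univ_mem, hIc,
      ← pow_add, Nat.sub_add_cancel (hIc ▸ hle)]
  let bad : Finset (V → Fin s) := (indepSets G t).biUnion fun I => Finset.univ.biUnion (M I)
  have hbad : bad.card * s ^ t ≤ (indepSets G t).card * s * s ^ Fintype.card V := by
    calc bad.card * s ^ t ≤ (∑ I ∈ indepSets G t, ∑ c : Fin s, (M I c).card) * s ^ t := by
          refine Nat.mul_le_mul_right _ (Finset.card_biUnion_le.trans ?_)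
          exact Finset.sum_le_sum fun I _ => Finset.card_biUnion_le
      _ = ∑ I ∈ indepSets G t, ∑ c : Fin s, s ^ Fintype.card V := by
          rw [Finset.sum_mul]
          refine Finset.sum_congr rfl fun I hI => ?_
          rw [Finset.sum_mul]
          exact Finset.sum_congr rfl fun c _ => hM I hI c
      _ = _ := by simp [mul_assoc]
  have hlt : bad.card < (Finset.univ : Finset (V → Fin s)).card := by
    rw [Finset.card_univ, Fintype.card_fun, Fintype.card_fin]
    have h1 : (indepSets G t).card * s * s ^ Fintype.card V < s ^ t * s ^ Fintype.card V :=
      Nat.mul_lt_mul_of_pos_right ht (by positivity)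
    have h2 : bad.card * s ^ t < s ^ Fintype.card V * s ^ t := by
      rw [mul_comm (s ^ Fintype.card V)]
      exact hbad.trans_lt h1
    exact lt_of_mul_lt_mul_right h2 (Nat.zero_le _)
  obtain ⟨f, -, hf⟩ := Finset.exists_mem_notMem_of_card_lt_card hlt
  have : Nonempty (Fin s) := ⟨⟨0, hs⟩⟩
  obtain ⟨c, hc⟩ : ∃ c : Fin s,
      Fintype.card V ≤ s * (Finset.univ.filter fun v => f v = c).card := by
    by_contra! h
    have h1 := Finset.sum_lt_sum_of_nonempty (Finset.univ_nonempty (α := Fin s)) fun c _ => h c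
    rw [← Finset.mul_sum, Finset.sum_const, Finset.card_univ, Fintype.card_fin, smul_eq_mul,
      ← Finset.card_eq_sum_card_fiberwise (fun v _ => Finset.mem_coe.mpr (Finset.mem_univ (f v))),
      Finset.card_univ] at h1
    exact lt_irrefl _ h1
  refine ⟨Finset.univ.filter fun v => f v = c, hc, fun I hI hIt hind => hf ?_⟩
  refine Finset.mem_biUnion.mpr ⟨I, Finset.mem_filter.mpr ⟨Finset.mem_univ _, hIt, hind⟩,
    Finset.mem_biUnion.mpr ⟨c, Finset.mem_univ _, Fintype.mem_piFinset.mpr fun v => ?_⟩⟩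
  split_ifs with hv
  · simpa using hI hv
  · exact Finset.mem_univ _

end Containers

/-! ### The lower bound -/

theorem card_lt_ramseyClique {V : Type} {G : SimpleGraph V} {s t : ℕ} (hG : G.CliqueFree s)
    {W : Finset V} (hW : ∀ I ⊆ W, I.card = t → ¬ IsIndepFinset G I) :
    W.card < ramseyClique s t := by
  classical
  -- The infimum defining `ramseyClique` is attained because the set is nonempty.
  have hmem : ∀ H : SimpleGraph (Fin (ramseyClique s t)), H.CliqueFree s →
      ∃ I : Finset (Fin (ramseyClique s t)), I.card = t ∧ IsIndepFinset H I := Nat.sInf_mem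
      (s := {n : ℕ | ∀ G : SimpleGraph (Fin n), G.CliqueFree s →
      ∃ I : Finset (Fin n), I.card = t ∧ IsIndepFinset G I}) (by
    obtain ⟨N, hN⟩ := exists_clique_or_indep s t
    refine ⟨N, fun H hH => ?_⟩
    rcases hN (Fin N) H Finset.univ (by simp) with ⟨K, -, hK⟩ | ⟨I, -, hI⟩
    · exact absurd hK (hH K)
    · exact ⟨I, hI⟩)
  by_contra! hle
  let e : Fin (ramseyClique s t) ↪ V :=
    (Fin.castLEEmb hle).trans (W.equivFin.symm.toEmbedding.trans (Function.Embedding.subtype _))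
  have heW : ∀ i, e i ∈ W := fun i => (W.equivFin.symm (Fin.castLE hle i)).2
  obtain ⟨I, hIt, hI⟩ := hmem (G.comap e) (hG.comap (SimpleGraph.Embedding.comap e G).isContained)
  refine hW (I.map e) ?_ (by rw [Finset.card_map]; exact hIt) ?_
  · intro v hv
    obtain ⟨i, -, rfl⟩ := Finset.mem_map.mp hv
    exact heW i
  · intro u hu v hv
    obtain ⟨i, hi, rfl⟩ := Finset.mem_map.mp hu
    obtain ⟨j, hj, rfl⟩ := Finset.mem_map.mp hv
    exact hI i hi j hj

/-- The bound obtained from a single prime `q`, when `t` is at least a constant times `q log² q` and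
the number `s` of parts is at least `4 e³ q² / t`. -/
theorem pow_four_le_ramseyClique {q t s : ℕ} (hq : q.Prime) (hq3 : 3 ≤ q)
    (hlarge : (1 + (5 / 6 : ℝ) ^ q) ^ (q ^ 4) < 2) (ht : 0 < t) (htq : t ≤ 4 * q ^ 2)
    (htlog : 2565 * (q * Real.log q ^ 2) ≤ t) (hs : 4 * Real.exp 3 * q ^ 2 ≤ s * t)
    (hst : (s : ℝ) < Real.exp t) :
    q ^ 4 ≤ 2 * (s * ramseyClique 4 t) := by
  classical
  obtain ⟨P, L, _, _, pts, hP, hL₁, hL₂, hpts, hlin, honan⟩ := exists_unital q hq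
  have hq0 : 0 < q := hq.pos
  obtain ⟨f, hf⟩ := exists_coloring pts hq0 hP hpts hL₂ hlarge
  set G := bichromaticGraph pts f with hG
  have hfree : G.CliqueFree 4 := bichromaticGraph_cliqueFree f hlin honan
  have hqR : (3 : ℝ) ≤ q := by exact_mod_cast hq3
  have htR : (0 : ℝ) < t := by exact_mod_cast ht
  have hlog : 1 ≤ Real.log q := by
    rw [Real.le_log_iff_exp_le (by linarith)]
    linarith [Real.exp_one_lt_d9]
  set α : ℝ := 1 / (256 * q) with hα
  have hα1 : α ≤ 1 := by
    rw [hα, div_le_one (by positivity)]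
    linarith
  set R : ℕ := 4 * q ^ 2 with hR
  have hRR : (R : ℝ) = 4 * (q : ℝ) ^ 2 := by rw [hR]; push_cast; ring
  set z : ℝ := t / R with hz
  have hRpos : (0 : ℝ) < R := by rw [hRR]; positivity
  have hz0 : 0 < z := by positivity
  have hz1 : z ≤ 1 := by
    rw [hz, div_le_one hRpos]
    exact_mod_cast htq
  -- With this `k`, `(1 - α) ^ k ≤ exp (-α k) ≤ q⁻²`, which brings `q⁴` vertices below `R`.
  set k : ℕ := ⌈512 * (q * Real.log q)⌉₊ with hk
  have hk₁ : 512 * (q * Real.log q) ≤ k := Nat.le_ceil _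
  have hk₂ : (k : ℝ) ≤ 513 * (q * Real.log q) := by
    have := Nat.ceil_lt_add_one (a := 512 * (q * Real.log q)) (by positivity)
    nlinarith
  have hdeg : ∀ A : Finset L, R < A.card → ∃ v ∈ A, ∃ B ⊆ A, (∀ w ∈ B, G.Adj v w) ∧
      α * A.card ≤ B.card := by
    intro A hA
    obtain ⟨v, hv, hd⟩ := exists_large_degree hq0 hP hlin
      (Finset.card_pos.mp (Nat.zero_lt_of_lt hA)) (hf A hA.le)
    refine ⟨v, hv, _, Finset.filter_subset _ _, fun w hw => (Finset.mem_filter.mp hw).2, ?_⟩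
    rw [hα, div_mul_eq_mul_div, one_mul, div_le_iff₀ (by positivity), mul_comm]
    exact_mod_cast hd
  have hLR : (Fintype.card L : ℝ) ≤ (q : ℝ) ^ 4 := by exact_mod_cast hL₂
  have hshrink : ((Finset.univ : Finset L).card : ℝ) * (1 - α) ^ k ≤ R := by
    rw [Finset.card_univ]
    have h1 : (1 - α) ^ k ≤ ((q : ℝ) ^ 2)⁻¹ := by
      calc (1 - α) ^ k ≤ Real.exp (-α) ^ k :=
            pow_le_pow_left₀ (by linarith) (Real.one_sub_le_exp_neg α) _
        _ = Real.exp (-(k * α)) := by rw [← Real.exp_nat_mul]; ring_nf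
        _ ≤ Real.exp (-(2 * Real.log q)) := by
            refine Real.exp_le_exp.mpr (neg_le_neg ?_)
            rw [hα, mul_one_div, le_div_iff₀ (by positivity)]
            linarith
        _ = ((q : ℝ) ^ 2)⁻¹ := by
            rw [Real.exp_neg, two_mul, Real.exp_add, Real.exp_log (by linarith), sq]
    calc (Fintype.card L : ℝ) * (1 - α) ^ k ≤ (q : ℝ) ^ 4 * ((q : ℝ) ^ 2)⁻¹ :=
          mul_le_mul hLR h1 (pow_nonneg (by linarith) _) (by positivity)
      _ = (q : ℝ) ^ 2 := by field_simp
      _ ≤ R := by rw [hRR]; nlinarith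
  have hpoly := indepPoly_le G hz0.le hα1 hdeg Finset.univ k hshrink
  have hcount : ((indepSets G t).card : ℝ) * z ^ t ≤ Real.exp (2 * t) := by
    refine (card_indepSets_mul_le G hz0.le t).trans (hpoly.trans ?_)
    rw [two_mul, Real.exp_add]
    refine mul_le_mul ?_ ?_ (by positivity) (by positivity)
    · calc (1 + z) ^ R ≤ Real.exp z ^ R :=
            pow_le_pow_left₀ (by positivity) (by linarith [Real.add_one_le_exp z]) _
        _ = Real.exp t := by
            rw [← Real.exp_nat_mul, hz, mul_div_cancel₀ _ hRpos.ne']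
    · calc (1 + ((Finset.univ : Finset L).card : ℝ) * z) ^ k ≤ ((q : ℝ) ^ 5) ^ k := by
            refine pow_le_pow_left₀ (by positivity) ?_ _
            rw [Finset.card_univ]
            have h1 : (Fintype.card L : ℝ) * z ≤ (q : ℝ) ^ 4 * 1 :=
              mul_le_mul hLR hz1 hz0.le (by positivity)
            have h2 : (1 : ℝ) ≤ (q : ℝ) ^ 4 := one_le_pow₀ (by linarith)
            calc _ ≤ 2 * (q : ℝ) ^ 4 := by linarith
              _ ≤ q * (q : ℝ) ^ 4 := mul_le_mul_of_nonneg_right (by linarith) (by positivity)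
              _ = _ := by ring
        _ = Real.exp (k * (5 * Real.log q)) := by
            rw [Real.exp_nat_mul]
            congr 1
            rw [← Real.exp_log (show (0 : ℝ) < q by linarith), ← Real.exp_nat_mul,
              Real.log_exp]
            norm_num
        _ ≤ Real.exp t := by
            refine Real.exp_le_exp.mpr (le_trans ?_ htlog)
            calc (k : ℝ) * (5 * Real.log q) ≤ (513 * (q * Real.log q)) * (5 * Real.log q) :=
                  mul_le_mul_of_nonneg_right hk₂ (by linarith)
              _ = _ := by ring
  have hs0 : 0 < s := by
    rcases Nat.eq_zero_or_pos s with rfl | h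
    · have : 0 < 4 * Real.exp 3 * (q : ℝ) ^ 2 := by positivity
      norm_num at hs
      linarith
    · exact h
  have hsR : (0 : ℝ) < s := by exact_mod_cast hs0
  have hzs : Real.exp 3 ≤ z * s := by
    rw [hz, hRR, div_mul_eq_mul_div, le_div_iff₀ (by positivity)]
    linarith
  have hfew : (indepSets G t).card * s < s ^ t := by
    have h1 : ((indepSets G t).card * s : ℝ) * z ^ t < s ^ t * z ^ t := by
      calc ((indepSets G t).card * s : ℝ) * z ^ t = ((indepSets G t).card * z ^ t) * s := by ring
        _ ≤ Real.exp (2 * t) * s := mul_le_mul_of_nonneg_right hcount hsR.le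
        _ < Real.exp (2 * t) * Real.exp t := mul_lt_mul_of_pos_left hst (Real.exp_pos _)
        _ = Real.exp 3 ^ t := by rw [← Real.exp_add, ← Real.exp_nat_mul]; ring_nf
        _ ≤ (z * s) ^ t := pow_le_pow_left₀ (Real.exp_pos _).le hzs _
        _ = _ := by rw [mul_pow, mul_comm]
    have h2 := lt_of_mul_lt_mul_right h1 (by positivity)
    exact_mod_cast h2
  obtain ⟨W, hWc, hW⟩ := exists_sparse_subset G hs0 hfew
  have hr := card_lt_ramseyClique hfree hW
  have h1 : s * W.card ≤ s * ramseyClique 4 t := Nat.mul_le_mul_left _ hr.le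
  have h2 : q ^ 4 = q * q ^ 3 := by ring
  have h3 : 3 * q ^ 3 ≤ q * q ^ 3 := Nat.mul_le_mul_right _ hq3
  omega

theorem eventually_coloring_bound : ∀ᶠ q : ℕ in Filter.atTop,
    (1 + (5 / 6 : ℝ) ^ q) ^ (q ^ 4) < 2 := by
  have h := tendsto_pow_const_mul_const_pow_of_abs_lt_one 4 (r := (5 / 6 : ℝ))
    (by rw [abs_of_pos] <;> norm_num)
  filter_upwards [h.eventually_lt_const (show (0 : ℝ) < 1 / 2 by norm_num)] with q hq
  calc (1 + (5 / 6 : ℝ) ^ q) ^ (q ^ 4) ≤ Real.exp ((5 / 6 : ℝ) ^ q) ^ (q ^ 4) :=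
        pow_le_pow_left₀ (by positivity) (by linarith [Real.add_one_le_exp ((5 / 6 : ℝ) ^ q)]) _
    _ = Real.exp ((q : ℝ) ^ 4 * (5 / 6 : ℝ) ^ q) := by rw [← Real.exp_nat_mul]; push_cast; rfl
    _ < Real.exp (Real.log 2) := Real.exp_lt_exp.mpr (by linarith [Real.log_two_gt_d9])
    _ = 2 := Real.exp_log (by norm_num)

theorem eventually_log_pow_le (n : ℕ) {c : ℝ} (hc : 0 < c) :
    ∀ᶠ t : ℕ in Filter.atTop, Real.log t ^ n ≤ c * t := by
  have h := (Real.isLittleO_pow_log_id_atTop (n := n)).bound hc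
  filter_upwards [tendsto_natCast_atTop_atTop.eventually h] with t ht
  simp only [id, Real.norm_eq_abs, Nat.abs_cast] at ht
  exact (le_abs_self _).trans ht

/-- The prime `q` is taken between `T` and `2T` for `T = t / (6000 log² t)`, so that
`2565 q log² q ≤ t`. -/
theorem eventually_ramsey_lower : ∀ᶠ t : ℕ in Filter.atTop,
    (1 / (200 * 6000 ^ 2) : ℝ) * (t : ℝ) ^ 3 / Real.log t ^ 4 ≤ ramseyClique 4 t := by
  obtain ⟨q₀, hq₀⟩ := Filter.eventually_atTop.mp eventually_coloring_bound
  have hc : (0 : ℝ) < 1 / (6000 * (q₀ + 3)) := by positivity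
  filter_upwards [eventually_log_pow_le 2 hc,
    eventually_log_pow_le 4 (show (0 : ℝ) < 1 / 9000000 by norm_num),
    Filter.eventually_gt_atTop 600] with t h2 h4 ht600
  have ht : (600 : ℝ) < t := by exact_mod_cast ht600
  have ht0 : (0 : ℝ) < t := by linarith
  have hl : 1 ≤ Real.log t := by
    rw [Real.le_log_iff_exp_le ht0]
    linarith [Real.exp_one_lt_d9]
  set l := Real.log t with hldef
  set T : ℝ := t / (6000 * l ^ 2) with hT
  have hTl : 6000 * l ^ 2 * T = t := by
    rw [hT]; field_simp
  have hT₀ : (q₀ : ℝ) + 3 ≤ T := by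
    rw [hT, le_div_iff₀ (by positivity)]
    rw [one_div, inv_mul_eq_div, le_div_iff₀ (by positivity)] at h2
    linarith
  have hTpos : 0 < T := by linarith [(Nat.cast_nonneg q₀ : (0 : ℝ) ≤ q₀)]
  obtain ⟨q, hq, hQq, hq2⟩ := Nat.exists_prime_lt_and_le_two_mul ⌊T⌋₊
    (Nat.floor_pos.mpr (by linarith [(Nat.cast_nonneg q₀ : (0 : ℝ) ≤ q₀)])).ne'
  have hTq : T ≤ q := (Nat.lt_of_floor_lt hQq).le
  have hqT : (q : ℝ) ≤ 2 * T := by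
    have h1 : (q : ℝ) ≤ 2 * ⌊T⌋₊ := by exact_mod_cast hq2
    linarith [Nat.floor_le hTpos.le]
  have hq₀q : q₀ + 3 ≤ q := by exact_mod_cast hT₀.trans hTq
  have hqpos : (0 : ℝ) < q := by linarith
  have hqt : (q : ℝ) ≤ t := by nlinarith [one_le_pow₀ hl (n := 2)]
  have htT : (t : ℝ) ≤ 4 * T ^ 2 := by
    have h5 : 9000000 * l ^ 4 ≤ t := by linarith
    have h6 : (t : ℝ) * (9000000 * l ^ 4) ≤ 4 * T ^ 2 * (9000000 * l ^ 4) := by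
      calc (t : ℝ) * (9000000 * l ^ 4) ≤ t * t := mul_le_mul_of_nonneg_left h5 ht0.le
        _ = (6000 * l ^ 2 * T) * (6000 * l ^ 2 * T) := by rw [hTl]
        _ = _ := by ring
    exact le_of_mul_le_mul_right h6 (by positivity)
  have htq : (t : ℝ) ≤ 4 * (q : ℝ) ^ 2 :=
    htT.trans (mul_le_mul_of_nonneg_left (pow_le_pow_left₀ hTpos.le hTq 2) (by norm_num))
  set s : ℕ := ⌈4 * Real.exp 3 * (q : ℝ) ^ 2 / t⌉₊ with hs
  have hs₁ : 4 * Real.exp 3 * (q : ℝ) ^ 2 ≤ s * t := by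
    rw [← div_le_iff₀ ht0]
    exact Nat.le_ceil _
  have he3 : Real.exp 3 ≤ 24 := by
    have h1 : Real.exp 3 = Real.exp 1 ^ 3 := by rw [← Real.exp_nat_mul]; norm_num
    rw [h1]
    calc Real.exp 1 ^ 3 ≤ 2.8 ^ 3 :=
          pow_le_pow_left₀ (Real.exp_pos _).le (by linarith [Real.exp_one_lt_d9]) _
      _ ≤ 24 := by norm_num
  have hs₂ : s * t ≤ 100 * (q : ℝ) ^ 2 := by
    have h1 := Nat.ceil_lt_add_one (a := 4 * Real.exp 3 * (q : ℝ) ^ 2 / t) (by positivity)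
    rw [← hs] at h1
    have h3 : (s : ℝ) * t ≤ (4 * Real.exp 3 * (q : ℝ) ^ 2 / t + 1) * t :=
      mul_le_mul_of_nonneg_right h1.le ht0.le
    rw [add_mul, div_mul_cancel₀ _ ht0.ne', one_mul] at h3
    nlinarith [mul_le_mul_of_nonneg_right he3 (sq_nonneg (q : ℝ))]
  have hst : (s : ℝ) < Real.exp t := by
    have h1 := Real.pow_div_factorial_le_exp (t : ℝ) ht0.le 3
    refine lt_of_lt_of_le ?_ h1
    rw [show ((Nat.factorial 3 : ℕ) : ℝ) = 6 by norm_num [Nat.factorial], lt_div_iff₀ (by norm_num)]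
    have h3 : (s : ℝ) ≤ 100 * t := by
      have : (s : ℝ) * t ≤ 100 * t * t :=
        hs₂.trans (by nlinarith [mul_le_mul hqt hqt hqpos.le ht0.le])
      exact le_of_mul_le_mul_right this ht0
    nlinarith [mul_pos ht0 ht0, mul_pos (mul_pos ht0 ht0) ht0]
  have htlog : 2565 * ((q : ℝ) * Real.log q ^ 2) ≤ t := by
    have hlq : Real.log q ≤ l := Real.log_le_log hqpos hqt
    have hlq0 : 0 ≤ Real.log q := Real.log_natCast_nonneg q
    have h1 : Real.log q ^ 2 ≤ l ^ 2 := pow_le_pow_left₀ hlq0 hlq 2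
    have h3 : (q : ℝ) * Real.log q ^ 2 ≤ 2 * T * l ^ 2 :=
      mul_le_mul hqT h1 (by positivity) (by positivity)
    have h5 : 0 ≤ T * l ^ 2 := by positivity
    linarith
  have main := pow_four_le_ramseyClique hq (by omega) (hq₀ q (by omega)) (by omega)
    (by exact_mod_cast htq) htlog hs₁ hst
  have mainR : (q : ℝ) ^ 4 ≤ 2 * (s * ramseyClique 4 t) := by exact_mod_cast main
  have h5 : (q : ℝ) ^ 2 * ((q : ℝ) ^ 2 * t) ≤ (q : ℝ) ^ 2 * (200 * ramseyClique 4 t) := by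
    calc (q : ℝ) ^ 2 * ((q : ℝ) ^ 2 * t) = (q : ℝ) ^ 4 * t := by ring
      _ ≤ 2 * ((s : ℝ) * ramseyClique 4 t) * t := mul_le_mul_of_nonneg_right mainR ht0.le
      _ = 2 * ((s : ℝ) * t) * ramseyClique 4 t := by ring
      _ ≤ 2 * (100 * (q : ℝ) ^ 2) * ramseyClique 4 t :=
          mul_le_mul_of_nonneg_right (by linarith) (Nat.cast_nonneg _)
      _ = _ := by ring
  have h6 : (q : ℝ) ^ 2 * t ≤ 200 * ramseyClique 4 t :=
    le_of_mul_le_mul_left h5 (by positivity)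
  have h7 : T ^ 2 * t ≤ (q : ℝ) ^ 2 * t :=
    mul_le_mul_of_nonneg_right (pow_le_pow_left₀ hTpos.le hTq 2) ht0.le
  have h8 : (1 / (200 * 6000 ^ 2) : ℝ) * (t : ℝ) ^ 3 / l ^ 4 = T ^ 2 * t / 200 := by
    rw [hT]; field_simp
  rw [h8]
  linarith

/-- There exists `c₁ > 0` such that for all integers `t ≥ 3`,
`r(4,t) ≥ c₁ · t³ / (log t)⁴`. -/
theorem ramsey_four_t_lower :
    ∃ c₁ : ℝ, 0 < c₁ ∧ ∀ t : ℕ, 3 ≤ t →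
      c₁ * (t : ℝ) ^ 3 / (Real.log t) ^ 4 ≤ (ramseyClique 4 t : ℝ) := by
  obtain ⟨t₀, ht₀⟩ := Filter.eventually_atTop.mp eventually_ramsey_lower
  refine ⟨min (1 / (200 * 6000 ^ 2)) (1 / ((t₀ : ℝ) + 1) ^ 3), by positivity, fun t ht => ?_⟩
  have htR : (3 : ℝ) ≤ t := by exact_mod_cast ht
  have hl : 1 ≤ Real.log t := by
    rw [Real.le_log_iff_exp_le (by linarith)]
    linarith [Real.exp_one_lt_d9]
  rcases le_total t₀ t with h | h
  · refine le_trans ?_ (ht₀ t h)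
    gcongr
    exact min_le_left _ _
  · -- For the remaining bounded values of `t` the left side is at most `1`.
    have hpos : 0 < ramseyClique 4 t := by
      have := card_lt_ramseyClique (V := Empty) (G := ⊥) (s := 4) (t := t) (W := ∅)
        (SimpleGraph.cliqueFree_bot (by norm_num)) (fun I hI hIt => by
          rw [Finset.subset_empty.mp hI, Finset.card_empty] at hIt
          omega)
      simpa using this
    have h1 : (1 : ℝ) ≤ ramseyClique 4 t := by exact_mod_cast hpos
    refine le_trans ?_ h1
    have hle : (t : ℝ) ≤ t₀ + 1 := by
      have : (t : ℝ) ≤ t₀ := by exact_mod_cast h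
      linarith
    rw [div_le_one (by positivity)]
    calc min (1 / (200 * 6000 ^ 2)) (1 / ((t₀ : ℝ) + 1) ^ 3) * (t : ℝ) ^ 3
        ≤ 1 / ((t₀ : ℝ) + 1) ^ 3 * ((t₀ : ℝ) + 1) ^ 3 := by
          gcongr
          exact min_le_right _ _
      _ = 1 := one_div_mul_cancel (by positivity)
      _ ≤ Real.log t ^ 4 := one_le_pow₀ hl
end

section
/- There exists a constant c₂ > 0 such that for all integers t ≥ 3, the Ramsey number satisfies r(4,t) ≤ c₂ · t³/(log t)². -/
open Finset

/-! ### Independent sets in triangle-free graphs -/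

lemma sum_card_powerset_two {V : Type*} [DecidableEq V] (X : Finset V) :
    2 * ∑ S ∈ X.powerset, #S = #X * 2 ^ #X := by
  induction X using Finset.induction_on with
  | empty => simp
  | insert a X ha ih =>
    have h : ∑ S ∈ X.powerset, #(insert a S) = ∑ S ∈ X.powerset, (#S + 1) :=
      sum_congr rfl fun S hS => card_insert_of_notMem fun h => ha (mem_powerset.1 hS h)
    rw [sum_powerset_insert ha, h, sum_add_distrib, card_insert_of_notMem ha]
    simp only [sum_const, card_powerset, smul_eq_mul, mul_one, pow_succ]
    linarith

/-- Here `F` is the family of independent subsets of `U`. Fix `v`, and fix the trace `H` of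
`W ∈ F` outside the closed neighbourhood of `v`. Since the neighbourhood of `v` is independent, the
sets with this trace are exactly `insert v H` and the `H ∪ S` with `S ⊆ X`, where `X` is the set of
neighbours of `v` without a neighbour in `H`. Over them, `D * [v ∈ W] + #(N(v) ∩ W)` has average
at least `(D + #X * 2 ^ (#X - 1)) / (1 + 2 ^ #X)`, which is at least `L` whether `#X` is large
(by the second term) or small (by the first). -/
lemma fibre_bound {V : Type*} [DecidableEq V] {G : SimpleGraph V} [DecidableRel G.Adj]
    {U : Finset V}
    (htri : ∀ u ∈ U, ∀ v ∈ U, ∀ w ∈ U, G.Adj u v → G.Adj u w → ¬ G.Adj v w)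
    {D L : ℕ} (hL : L * (1 + 16 ^ L) ≤ D) {v : V} (hv : v ∈ U)
    {F : Finset (Finset V)} (hF : ∀ W, W ∈ F ↔ W ⊆ U ∧ IsIndepFinset G W)
    {H : Finset V} (hH : H ∈ F) (hHv : ∀ u ∈ H, u ≠ v ∧ ¬ G.Adj v u) :
    L * #{W ∈ F | W.filter (fun u => u ≠ v ∧ ¬ G.Adj v u) = H} ≤
      ∑ W ∈ F with W.filter (fun u => u ≠ v ∧ ¬ G.Adj v u) = H,
        ((if v ∈ W then D else 0) + #{u ∈ W | G.Adj v u}) := by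
  classical
  set X : Finset V := {u ∈ U | G.Adj v u ∧ ∀ h ∈ H, ¬ G.Adj u h} with hX
  obtain ⟨hHU, hHI⟩ := (hF H).1 hH
  have hvX : v ∉ X := by simp [hX]
  have hvH : v ∉ H := fun h => (hHv v h).1 rfl
  have hdisj : Disjoint H X := disjoint_left.2 fun u hu hu' =>
    (hHv u hu).2 (mem_filter.1 hu').2.1
  have hnot : insert v H ∉ X.powerset.image (H ∪ ·) := by
    intro h
    obtain ⟨S, hS, hSe⟩ := mem_image.1 h
    have : v ∈ H ∪ S := by rw [hSe]; exact mem_insert_self _ _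
    rcases mem_union.1 this with h | h
    · exact hvH h
    · exact hvX (mem_powerset.1 hS h)
  have hinj : Set.InjOn (H ∪ ·) (X.powerset : Set (Finset V)) := by
    intro S hS T hT hST
    have hS' := mem_powerset.1 (mem_coe.1 hS)
    have hT' := mem_powerset.1 (mem_coe.1 hT)
    have h1 := union_sdiff_cancel_left (hdisj.mono_right hS')
    have h2 := union_sdiff_cancel_left (hdisj.mono_right hT')
    simp only at hST
    rw [← h1, ← h2, hST]
  have hfib : ({W ∈ F | W.filter (fun u => u ≠ v ∧ ¬ G.Adj v u) = H} : Finset (Finset V)) =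
      insert (insert v H) (X.powerset.image (H ∪ ·)) := by
    ext W
    simp only [mem_filter, hF, mem_insert, mem_image, mem_powerset]
    constructor
    · rintro ⟨⟨hWU, hWI⟩, hWH⟩
      by_cases hvW : v ∈ W
      · left
        ext u
        rw [← hWH, mem_insert, mem_filter]
        constructor
        · intro hu
          by_cases huv : u = v
          · exact Or.inl huv
          · exact Or.inr ⟨hu, huv, hWI v hvW u hu⟩
        · rintro (rfl | h)
          · exact hvW
          · exact h.1
      · right
        refine ⟨{u ∈ W | G.Adj v u}, ?_, ?_⟩
        · intro u hu
          obtain ⟨hu, huv⟩ := mem_filter.1 hu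
          refine mem_filter.2 ⟨hWU hu, huv, fun h hh => ?_⟩
          rw [← hWH] at hh
          exact hWI u hu h (mem_filter.1 hh).1
        · ext u
          rw [← hWH, mem_union, mem_filter, mem_filter]
          constructor
          · rintro (h | h) <;> exact h.1
          · intro hu
            by_cases hvu : G.Adj v u
            · exact Or.inr ⟨hu, hvu⟩
            · exact Or.inl ⟨hu, fun e => hvW (e ▸ hu), hvu⟩
    · rintro (rfl | ⟨S, hS, rfl⟩)
      · refine ⟨⟨insert_subset hv hHU, ?_⟩, ?_⟩
        · intro a ha b hb hab
          rcases mem_insert.1 ha with rfl | ha' <;> rcases mem_insert.1 hb with rfl | hb'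
          · exact G.loopless.irrefl _ hab
          · exact (hHv b hb').2 hab
          · exact (hHv a ha').2 hab.symm
          · exact hHI a ha' b hb' hab
        · ext u
          simp only [mem_filter, mem_insert]
          constructor
          · rintro ⟨h | h, h', -⟩
            · exact absurd h h'
            · exact h
          · exact fun h => ⟨Or.inr h, hHv u h⟩
      · have hS' : ∀ u ∈ S, u ∈ U ∧ G.Adj v u ∧ ∀ h ∈ H, ¬ G.Adj u h :=
          fun u hu => mem_filter.1 (hS hu)
        refine ⟨⟨union_subset hHU fun u hu => (hS' u hu).1, ?_⟩, ?_⟩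
        · intro a ha b hb hab
          rcases mem_union.1 ha with ha | ha <;> rcases mem_union.1 hb with hb | hb
          · exact hHI a ha b hb hab
          · exact (hS' b hb).2.2 a ha hab.symm
          · exact (hS' a ha).2.2 b hb hab
          · exact htri v hv a (hS' a ha).1 b (hS' b hb).1 (hS' a ha).2.1 (hS' b hb).2.1 hab
        · ext u
          simp only [mem_filter, mem_union]
          constructor
          · rintro ⟨h | h, h', h''⟩
            · exact h
            · exact absurd (hS' u h).2.1 h''
          · exact fun h => ⟨Or.inl h, hHv u h⟩
  rw [hfib, sum_insert hnot, card_insert_of_notMem hnot, card_image_of_injOn hinj,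
    sum_image hinj, card_powerset]
  have h1 : ∑ S ∈ X.powerset, #S ≤ ∑ S ∈ X.powerset,
      ((if v ∈ H ∪ S then D else 0) + #{u ∈ H ∪ S | G.Adj v u}) := by
    refine sum_le_sum fun S hS => le_add_left (card_le_card fun u hu => ?_)
    exact mem_filter.2 ⟨mem_union_right _ hu, (mem_filter.1 (mem_powerset.1 hS hu)).2.1⟩
  have h2 := sum_card_powerset_two X
  have h3 : D ≤ (if v ∈ insert v H then D else 0) + #{u ∈ insert v H | G.Adj v u} := by
    simp
  refine le_trans ?_ (add_le_add h3 h1)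
  -- The cases differ in which of the two terms reaches `L` times the number of sets.
  rcases le_or_gt (4 * L) #X with hx | hx
  · have : 4 * L * 2 ^ #X ≤ #X * 2 ^ #X := Nat.mul_le_mul_right _ hx
    have h4 : L * 1 ≤ L * 2 ^ #X := Nat.mul_le_mul_left _ Nat.one_le_two_pow
    nlinarith
  · have : (2 : ℕ) ^ #X ≤ 16 ^ L := by
      calc (2 : ℕ) ^ #X ≤ 2 ^ (4 * L) := Nat.pow_le_pow_right (by norm_num) hx.le
        _ = 16 ^ L := by rw [pow_mul]; norm_num
    have h4 : L * (2 ^ #X + 1) ≤ L * (1 + 16 ^ L) := Nat.mul_le_mul_left _ (by omega)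
    omega

/-- A triangle-free set `U` of maximum degree at most `D` contains an independent set of size
of order `#U * log D / D`: `a` bounds its independent sets and `L` is of order `log D`.
Double counting of `∑ W, ∑ v, (D * [v ∈ W] + #(N(v) ∩ W))` over independent sets `W`; each inner sum
is at most `2 * D * #W`. -/
lemma triangleFree_bound {V : Type*} (G : SimpleGraph V) [DecidableRel G.Adj]
    {U : Finset V}
    (htri : ∀ u ∈ U, ∀ v ∈ U, ∀ w ∈ U, G.Adj u v → G.Adj u w → ¬ G.Adj v w)
    {D L a : ℕ} (hL : L * (1 + 16 ^ L) ≤ D)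
    (hdeg : ∀ v ∈ U, #{u ∈ U | G.Adj v u} ≤ D)
    (ha : ∀ I ⊆ U, IsIndepFinset G I → #I ≤ a) :
    #U * L ≤ 2 * D * a := by
  classical
  set F : Finset (Finset V) := {W ∈ U.powerset | IsIndepFinset G W} with hFdef
  have hF : ∀ W, W ∈ F ↔ W ⊆ U ∧ IsIndepFinset G W := by simp [hFdef]
  have hFpos : 0 < #F := card_pos.2 ⟨∅, by simp [hF, IsIndepFinset]⟩
  have hlow : ∀ v ∈ U, L * #F ≤
      ∑ W ∈ F, ((if v ∈ W then D else 0) + #{u ∈ W | G.Adj v u}) := by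
    intro v hv
    set φ : Finset V → Finset V := fun W => {u ∈ W | u ≠ v ∧ ¬ G.Adj v u} with hφ
    have hmaps : ∀ W ∈ F, φ W ∈ F.image φ := fun W hW => mem_image_of_mem _ hW
    rw [card_eq_sum_card_fiberwise hmaps, ← sum_fiberwise_of_maps_to hmaps, mul_sum]
    refine sum_le_sum fun H hH => ?_
    obtain ⟨W, hW, rfl⟩ := mem_image.1 hH
    obtain ⟨hWU, hWI⟩ := (hF W).1 hW
    exact fibre_bound htri hL hv hF
      ((hF _).2 ⟨(filter_subset _ _).trans hWU, fun x hx y hy =>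
        hWI x (mem_filter.1 hx).1 y (mem_filter.1 hy).1⟩)
      fun u hu => (mem_filter.1 hu).2
  have hup : ∀ W ∈ F, ∑ v ∈ U, ((if v ∈ W then D else 0) + #{u ∈ W | G.Adj v u}) ≤
      2 * D * a := by
    intro W hW
    obtain ⟨hWU, hWI⟩ := (hF W).1 hW
    have h1 : ∑ v ∈ U, (if v ∈ W then D else 0) = #W * D := by
      rw [← sum_filter, filter_mem_eq_inter, inter_eq_right.2 hWU]; simp
    have h2 : ∑ v ∈ U, #{u ∈ W | G.Adj v u} ≤ #W * D := by
      have := sum_card_bipartiteAbove_eq_sum_card_bipartiteBelow (s := U) (t := W) G.Adj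
      simp only [bipartiteAbove, bipartiteBelow] at this
      rw [this]
      refine sum_le_card_nsmul _ _ _ fun u hu => ?_
      simpa only [G.adj_comm u] using hdeg u (hWU hu)
    rw [sum_add_distrib, h1]
    have h3 := Nat.mul_le_mul_right D (ha W hWU hWI)
    linarith
  have h1 : #U * (L * #F) ≤ ∑ v ∈ U, ∑ W ∈ F,
      ((if v ∈ W then D else 0) + #{u ∈ W | G.Adj v u}) := by
    simpa using card_nsmul_le_sum U _ _ hlow
  rw [sum_comm] at h1
  have h2 := h1.trans (sum_le_card_nsmul F _ _ hup)
  rw [smul_eq_mul] at h2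
  refine Nat.le_of_mul_le_mul_left (?_ : #F * _ ≤ #F * _) hFpos
  linarith

/-! ### Random sampling -/

/-- In a uniformly random colouring with `k` colours, all of `A` gets colour `0` with
probability `k ^ (-#A)`. -/
lemma card_vanishing {V : Type*} [Fintype V] [DecidableEq V] {k : ℕ} [NeZero k]
    (A : Finset V) :
    #{f : V → Fin k | ∀ u ∈ A, f u = 0} * k ^ #A = k ^ Fintype.card V := by
  have : ({f : V → Fin k | ∀ u ∈ A, f u = 0} : Finset _) =
      Fintype.piFinset fun u => if u ∈ A then {0} else univ := by
    ext f
    simp only [mem_filter, mem_univ, true_and, Fintype.mem_piFinset]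
    refine forall_congr' fun u => ?_
    by_cases h : u ∈ A <;> simp [h]
  rw [this, Fintype.card_piFinset]
  have h2 : ∀ u : V, #(if u ∈ A then ({0} : Finset (Fin k)) else univ) =
      if u ∈ A then 1 else k := by
    intro u; split_ifs <;> simp
  simp only [h2]
  have h3 : k ^ #A = ∏ u : V, if u ∈ A then k else 1 := by
    rw [prod_ite_mem]; simp
  rw [h3, ← prod_mul_distrib]
  have h4 : ∀ u : V, ((if u ∈ A then 1 else k) * if u ∈ A then k else 1) = k := by
    intro u; split_ifs <;> simp
  simp [h4]

/-- A locally sparse graph has a triangle-free induced subgraph on at least `1 / (2 * k)` of the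
vertices with maximum degree at most `D`. Let `S` be the colour class `0` of a random `k`-colouring;
remove from `S` the vertices in triangles of `S` and those with more than `D` neighbours in `S`.
By the two numerical hypotheses each removal costs on average at most a quarter of the mean
size of `S`. -/
lemma exists_sample {V : Type*} [Fintype V] [Nonempty V] (G : SimpleGraph V) [DecidableRel G.Adj]
    {d t k D : ℕ} (hk : 0 < k) (hD : 0 < D)
    (hdeg : ∀ v, #{u | G.Adj v u} ≤ d)
    (hco : ∀ v u, G.Adj v u → #{w | G.Adj v w ∧ G.Adj u w} ≤ t)
    (h1 : 4 * (d * t) ≤ k ^ 2) (h2 : 4 * d ≤ k * D) :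
    ∃ U : Finset V, Fintype.card V ≤ 2 * k * #U ∧
      (∀ u ∈ U, ∀ v ∈ U, ∀ w ∈ U, G.Adj u v → G.Adj u w → ¬ G.Adj v w) ∧
      ∀ v ∈ U, #{u ∈ U | G.Adj v u} ≤ D := by
  classical
  have : NeZero k := ⟨hk.ne'⟩
  set n := Fintype.card V with hn
  have hn0 : 0 < n := Fintype.card_pos
  -- `P` and `T` hold the ordered edges and ordered triangles; `PS f` and `TS f` those of colour `0`.
  set P : Finset (Σ _ : V, V) := univ.sigma fun v => {u | G.Adj v u} with hP
  set T : Finset (Σ _ : (Σ _ : V, V), V) :=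
    P.sigma fun p => {w | G.Adj p.1 w ∧ G.Adj p.2 w} with hT
  have hPc : #P ≤ n * d := by
    rw [hP, card_sigma]
    simpa using sum_le_card_nsmul univ _ _ fun v _ => hdeg v
  have hTc : #T ≤ n * d * t := by
    rw [hT, card_sigma]
    refine (sum_le_card_nsmul P _ t fun p hp => ?_).trans ?_
    · exact hco _ _ (by simpa [hP] using hp)
    · exact Nat.mul_le_mul_right _ hPc
  set S : (V → Fin k) → Finset V := fun f => {v | f v = 0} with hS
  set PS : (V → Fin k) → Finset (Σ _ : V, V) := fun f => {p ∈ P | f p.1 = 0 ∧ f p.2 = 0} with hPS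
  set TS : (V → Fin k) → Finset (Σ _ : (Σ _ : V, V), V) :=
    fun f => {p ∈ T | f p.1.1 = 0 ∧ f p.1.2 = 0 ∧ f p.2 = 0} with hTS
  set N := k ^ n with hN
  have hNpos : 0 < N := by positivity
  have hSsum : (∑ f, #(S f)) * k = n * N := by
    have := sum_card_bipartiteAbove_eq_sum_card_bipartiteBelow
      (s := (univ : Finset (V → Fin k))) (t := (univ : Finset V)) (fun f v => f v = 0)
    simp only [bipartiteAbove, bipartiteBelow] at this
    rw [hS, this, sum_mul]
    have h : ∀ v : V, #{f : V → Fin k | f v = 0} * k = N := by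
      intro v
      simpa using card_vanishing (k := k) {v}
    simp [h, hn]
  have hPsum : (∑ f, #(PS f)) * k ^ 2 ≤ n * d * N := by
    have := sum_card_bipartiteAbove_eq_sum_card_bipartiteBelow
      (s := (univ : Finset (V → Fin k))) (t := P) (fun f p => f p.1 = 0 ∧ f p.2 = 0)
    simp only [bipartiteAbove, bipartiteBelow] at this
    rw [hPS, this, sum_mul]
    have h : ∀ p ∈ P, #{f : V → Fin k | f p.1 = 0 ∧ f p.2 = 0} * k ^ 2 ≤ N := by
      intro p hp
      have hp : G.Adj p.1 p.2 := by simpa [hP] using hp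
      have := card_vanishing (k := k) {p.1, p.2}
      rw [card_pair hp.ne] at this
      simpa using this.le
    refine (sum_le_card_nsmul P _ N h).trans ?_
    exact Nat.mul_le_mul_right _ hPc
  have hTsum : (∑ f, #(TS f)) * k ^ 3 ≤ n * d * t * N := by
    have := sum_card_bipartiteAbove_eq_sum_card_bipartiteBelow
      (s := (univ : Finset (V → Fin k))) (t := T)
      (fun f p => f p.1.1 = 0 ∧ f p.1.2 = 0 ∧ f p.2 = 0)
    simp only [bipartiteAbove, bipartiteBelow] at this
    rw [hTS, this, sum_mul]
    have h : ∀ p ∈ T, #{f : V → Fin k | f p.1.1 = 0 ∧ f p.1.2 = 0 ∧ f p.2 = 0} * k ^ 3 ≤ N := by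
      intro p hp
      have hp : G.Adj p.1.1 p.1.2 ∧ G.Adj p.1.1 p.2 ∧ G.Adj p.1.2 p.2 := by
        simpa [hT, hP] using hp
      have := card_vanishing (k := k) {p.1.1, p.1.2, p.2}
      rw [card_eq_three.2 ⟨_, _, _, hp.1.ne, hp.2.1.ne, hp.2.2.ne, rfl⟩] at this
      simpa using this.le
    refine (sum_le_card_nsmul T _ N h).trans ?_
    exact Nat.mul_le_mul_right _ hTc
  -- `X f` and `B f` are the vertices to be removed from the class `S f`.
  set X : (V → Fin k) → Finset V := fun f => (TS f).image fun p => p.1.1 with hX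
  set B : (V → Fin k) → Finset V := fun f => {v ∈ S f | D < #{u ∈ S f | G.Adj v u}} with hB
  set U : (V → Fin k) → Finset V := fun f => S f \ (X f ∪ B f) with hU
  have hXc : ∀ f, #(X f) ≤ #(TS f) := fun f => card_image_le
  have hBc : ∀ f, #(B f) * D ≤ #(PS f) := by
    intro f
    calc #(B f) * D ≤ ∑ v ∈ B f, #{u ∈ S f | G.Adj v u} := by
          simpa using card_nsmul_le_sum (B f) _ D fun v hv => (mem_filter.1 hv).2.le
      _ = #((B f).sigma fun v => {u ∈ S f | G.Adj v u}) := (card_sigma _ _).symm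
      _ ≤ #(PS f) := by
          refine card_le_card fun p hp => ?_
          simp only [hB, hS, hPS, hP, mem_sigma, mem_filter, mem_univ, true_and] at hp ⊢
          tauto
  have hSc : ∀ f, #(S f) ≤ #(U f) + (#(X f) + #(B f)) := by
    intro f
    have := card_le_card_sdiff_add_card (s := S f) (t := X f ∪ B f)
    have h' := card_union_le (X f) (B f)
    simp only [hU]
    omega
  obtain ⟨f, hf⟩ : ∃ f, n ≤ 2 * k * #(U f) := by
    by_contra! hcon
    have e1 : ∑ f : V → Fin k, 2 * k * #(U f) < N * n := by
      have := sum_lt_sum_of_nonempty (univ_nonempty) fun f (_ : f ∈ univ) => hcon f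
      simpa [hN, hn] using this
    rw [← mul_sum] at e1
    have e2 : ∑ f, #(S f) ≤ ∑ f, #(U f) + (∑ f, #(TS f) + ∑ f, #(B f)) := by
      rw [← sum_add_distrib, ← sum_add_distrib]
      exact sum_le_sum fun f _ => (hSc f).trans (by gcongr; exact hXc f)
    have e3 : (∑ f, #(B f)) * D ≤ ∑ f, #(PS f) := by
      rw [sum_mul]; exact sum_le_sum fun f _ => hBc f
    generalize ∑ f, #(S f) = s at *
    generalize ∑ f, #(U f) = u at *
    generalize ∑ f, #(TS f) = x at *
    generalize ∑ f, #(B f) = b at *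
    generalize ∑ f, #(PS f) = p at *
    have e4 : 4 * k * x ≤ n * N := by
      refine Nat.le_of_mul_le_mul_right (c := k ^ 2) ?_ (by positivity)
      calc 4 * k * x * k ^ 2 = 4 * (x * k ^ 3) := by ring
        _ ≤ 4 * (n * d * t * N) := by gcongr
        _ = n * N * (4 * (d * t)) := by ring
        _ ≤ n * N * k ^ 2 := by gcongr
    have e5 : 4 * k * b ≤ n * N := by
      refine Nat.le_of_mul_le_mul_right (c := k * D) ?_ (by positivity)
      calc 4 * k * b * (k * D) = 4 * (b * D * k ^ 2) := by ring
        _ ≤ 4 * (p * k ^ 2) := by gcongr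
        _ ≤ 4 * (n * d * N) := by gcongr
        _ = n * N * (4 * d) := by ring
        _ ≤ n * N * (k * D) := by gcongr
    have e6 := Nat.mul_le_mul_left (2 * k) e2
    nlinarith
  have hUS : U f ⊆ S f := sdiff_subset
  refine ⟨U f, hf, ?_, ?_⟩
  · intro u hu v hv w hw huv huw hvw
    refine (mem_sdiff.1 hu).2 (mem_union_left _ (mem_image.2 ⟨⟨⟨u, v⟩, w⟩, ?_, rfl⟩))
    have := hUS hu
    have := hUS hv
    have := hUS hw
    simp only [hTS, hT, hP, hS, mem_sigma, mem_filter, mem_univ, true_and] at *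
    tauto
  · intro v hv
    by_contra! h
    refine (mem_sdiff.1 hv).2 (mem_union_right _ (mem_filter.2 ⟨hUS hv, h.trans_le ?_⟩))
    exact card_le_card (filter_subset_filter _ hUS)

/-! ### The order of a `K₄`-free graph with small independent sets -/

lemma pow_cond (L : ℕ) : L * (1 + 16 ^ L) ≤ 32 ^ L := by
  rcases Nat.eq_zero_or_pos L with rfl | hL
  · simp
  have h1 : 2 * L ≤ 2 ^ L := by
    obtain ⟨m, rfl⟩ : ∃ m, L = m + 1 := ⟨L - 1, by omega⟩
    have := m.lt_two_pow_self
    rw [pow_succ]; omega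
  have h2 : 1 ≤ 16 ^ L := Nat.one_le_pow _ _ (by norm_num)
  calc L * (1 + 16 ^ L) ≤ L * (16 ^ L + 16 ^ L) := by gcongr
    _ = 2 * L * 16 ^ L := by ring
    _ ≤ 2 ^ L * 16 ^ L := by gcongr
    _ = 32 ^ L := by rw [← mul_pow]; norm_num

lemma cliqueFree_four {V : Type*} {G : SimpleGraph V} (h : G.CliqueFree 4) {a b c d : V}
    (hab : G.Adj a b) (hac : G.Adj a c) (had : G.Adj a d) (hbc : G.Adj b c) (hbd : G.Adj b d) :
    ¬ G.Adj c d := by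
  classical
  intro hcd
  refine h {a, b, c, d} ((G.isNClique_iff).2 ⟨?_, ?_⟩)
  · simp only [coe_insert, coe_singleton, SimpleGraph.isClique_iff, Set.Pairwise]
    simp only [Set.mem_insert_iff, Set.mem_singleton_iff]
    rintro x (rfl | rfl | rfl | rfl) y (rfl | rfl | rfl | rfl) hxy <;>
      first | exact absurd rfl hxy | assumption | (apply SimpleGraph.Adj.symm; assumption)
  · rw [card_insert_of_notMem (by simp [hab.ne, hac.ne, had.ne]),
      card_eq_three.2 ⟨_, _, _, hbc.ne, hbd.ne, hcd.ne, rfl⟩]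

/-- A `K₄`-free graph without independent sets of more than `t` vertices has order
`O(t ^ 3 / L ^ 2)`, where `L` is of order `log t`. -/
lemma order_bound {V : Type*} [Fintype V] {G : SimpleGraph V} (hG : G.CliqueFree 4)
    {t L : ℕ} (ht : ∀ I : Finset V, IsIndepFinset G I → #I ≤ t) (hL : 4 ≤ L) (hLt : 32 ^ L ≤ t) :
    Fintype.card V * (L * (L / 4)) ≤ 36 * t ^ 3 := by
  classical
  rcases isEmpty_or_nonempty V with hV | hV
  · simp
  have hco : ∀ v u, G.Adj v u → #{w | G.Adj v w ∧ G.Adj u w} ≤ t := by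
    intro v u hvu
    refine ht _ fun x hx y hy => ?_
    simp only [mem_filter, mem_univ, true_and] at hx hy
    exact cliqueFree_four hG hvu hx.1 hy.1 hx.2 hy.2
  have hdegL : ∀ v, #{u | G.Adj v u} * L ≤ 2 * t * t := by
    intro v
    refine triangleFree_bound G (U := {u | G.Adj v u}) ?_ ((pow_cond L).trans hLt) ?_
      fun I _ => ht I
    · intro x hx y hy z hz hxy hxz
      simp only [mem_filter, mem_univ, true_and] at hx hy hz
      exact cliqueFree_four hG hx hy hz hxy hxz
    · intro u hu
      rw [filter_filter]
      exact hco v u (mem_filter.1 hu).2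
  have hL0 : 0 < L := by omega
  have hdeg : ∀ v, #{u | G.Adj v u} ≤ 2 * t * t / L := fun v =>
    (Nat.le_div_iff_mul_le hL0).2 (hdegL v)
  set d := 2 * t * t / L with hd
  set D := 32 ^ (L / 4) with hDdef
  have hD : 0 < D := by positivity
  have hDL : L * D ^ 2 ≤ t := by
    calc L * D ^ 2 ≤ 2 ^ L * D ^ 2 := by gcongr; exact L.lt_two_pow_self.le
      _ = 2 ^ (L + 10 * (L / 4)) := by
          rw [hDdef, pow_add, pow_mul, ← pow_mul, mul_comm (L / 4), pow_mul]; norm_num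
      _ ≤ 2 ^ (5 * L) := Nat.pow_le_pow_right (by norm_num) (by omega)
      _ = 32 ^ L := by rw [pow_mul]; norm_num
      _ ≤ t := hLt
  have hdL : d * L ≤ 2 * t * t := Nat.div_mul_le_self _ _
  set k := 8 * t * t / (L * D) + 1 with hk
  -- `D` is a small power of `t`, so that `4 * d * t ≤ k ^ 2` and still `log D` is of order `log t`.
  have hLD : 0 < L * D := by positivity
  have hk1 : 8 * t * t ≤ k * (L * D) := by
    have := Nat.div_add_mod (8 * t * t) (L * D)
    have := Nat.mod_lt (8 * t * t) hLD
    rw [hk]; nlinarith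
  have hk2 : k * (L * D) ≤ 9 * t * t := by
    have h := Nat.div_mul_le_self (8 * t * t) (L * D)
    have h' : L * D ≤ t * t := by
      calc L * D ≤ L * D ^ 2 := by gcongr; exact Nat.le_self_pow (by norm_num) _
        _ ≤ t := hDL
        _ ≤ t * t := Nat.le_mul_self t
    rw [hk]; nlinarith
  have c2 : 4 * d ≤ k * D := by
    refine Nat.le_of_mul_le_mul_right (c := L) ?_ hL0
    nlinarith
  have c1 : 4 * (d * t) ≤ k ^ 2 := by
    refine Nat.le_of_mul_le_mul_right (c := (L * D) ^ 2) ?_ (by positivity)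
    calc 4 * (d * t) * (L * D) ^ 2 = 4 * (d * L) * t * (L * D ^ 2) := by ring
      _ ≤ 4 * (2 * t * t) * t * t := by gcongr
      _ ≤ (8 * t * t) * (8 * t * t) := by nlinarith [Nat.zero_le (t * t * t * t)]
      _ ≤ (k * (L * D)) * (k * (L * D)) := by gcongr
      _ = _ := by ring
  have hk0 : 0 < k := Nat.succ_pos _
  obtain ⟨U, hU, hUt, hUd⟩ := exists_sample G hk0 hD hdeg hco c1 c2
  have hfin := triangleFree_bound G hUt (pow_cond (L / 4)) hUd fun I _ => ht I
  calc Fintype.card V * (L * (L / 4)) ≤ 2 * k * #U * (L * (L / 4)) := by gcongr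
    _ = 2 * k * L * (#U * (L / 4)) := by ring
    _ ≤ 2 * k * L * (2 * D * t) := by gcongr
    _ = 4 * t * (k * (L * D)) := by ring
    _ ≤ 4 * t * (9 * t * t) := by gcongr
    _ = _ := by ring

/-! ### The Ramsey number -/

lemma ramsey_large {t : ℕ} (ht : 32 ^ 4 ≤ t) :
    (ramseyClique 4 t : ℝ) ≤ 7201 * (t : ℝ) ^ 3 / (Real.log t) ^ 2 := by
  have ht1 : (1 : ℝ) < t := by exact_mod_cast lt_of_lt_of_le (by norm_num) ht
  have hlog : 0 < Real.log t := Real.log_pos ht1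
  set L := Nat.log 32 t with hLdef
  have hL : 4 ≤ L := Nat.le_log_of_pow_le (by norm_num) ht
  have hLt : 32 ^ L ≤ t := Nat.pow_log_le_self _ (by linarith)
  have hlogL : Real.log t ≤ 5 * L := by
    have h1 : (t : ℝ) ≤ 32 ^ (L + 1) := by
      exact_mod_cast (Nat.lt_pow_succ_log_self (by norm_num) t).le
    have h2 : Real.log t ≤ (L + 1) * Real.log 32 := by
      have := Real.log_le_log (by linarith) h1
      rw [Real.log_pow] at this
      exact_mod_cast this
    have h3 : Real.log 32 ≤ 4 := by
      rw [show (32 : ℝ) = 2 ^ 5 by norm_num, Real.log_pow]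
      have := Real.log_two_lt_d9
      push_cast; linarith
    have h4 : (4 : ℝ) ≤ L := by exact_mod_cast hL
    nlinarith
  have hLL : (Real.log t) ^ 2 ≤ 200 * ((L * (L / 4) : ℕ) : ℝ) := by
    have h1 : L * L ≤ 8 * (L * (L / 4)) := by
      have : L ≤ 8 * (L / 4) := by omega
      nlinarith
    have h2 : (L : ℝ) * L ≤ 8 * ((L * (L / 4) : ℕ) : ℝ) := by exact_mod_cast h1
    nlinarith
  set N := ⌊7200 * (t : ℝ) ^ 3 / (Real.log t) ^ 2⌋₊ + 1 with hN
  have hmem : N ∈ {n : ℕ | ∀ G : SimpleGraph (Fin n), G.CliqueFree 4 →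
      ∃ I : Finset (Fin n), I.card = t ∧ IsIndepFinset G I} := by
    intro G hG
    by_contra! hcon
    have hI : ∀ I : Finset (Fin N), IsIndepFinset G I → #I ≤ t := by
      intro I hI
      by_contra! h
      obtain ⟨J, hJ, hJc⟩ := exists_subset_card_eq h.le
      exact hcon J hJc fun u hu v hv => hI u (hJ hu) v (hJ hv)
    have h := order_bound hG hI hL hLt
    rw [Fintype.card_fin] at h
    have h' : (N : ℝ) * ((L * (L / 4) : ℕ) : ℝ) ≤ 36 * (t : ℝ) ^ 3 := by exact_mod_cast h
    have h2 : 7200 * (t : ℝ) ^ 3 / (Real.log t) ^ 2 < N := by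
      rw [hN]; exact_mod_cast Nat.lt_floor_add_one _
    rw [div_lt_iff₀ (by positivity)] at h2
    have := mul_le_mul_of_nonneg_left hLL (Nat.cast_nonneg (α := ℝ) N)
    linarith
  have h1 : (ramseyClique 4 t : ℝ) ≤ N := by exact_mod_cast Nat.sInf_le hmem
  have h2 : (N : ℝ) ≤ 7200 * (t : ℝ) ^ 3 / (Real.log t) ^ 2 + 1 := by
    rw [hN]; push_cast
    gcongr
    exact Nat.floor_le (by positivity)
  have h3 : 1 ≤ (t : ℝ) ^ 3 / (Real.log t) ^ 2 := by
    rw [one_le_div (by positivity)]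
    have := Real.log_le_self (by linarith : (0 : ℝ) ≤ t)
    calc (Real.log t) ^ 2 ≤ (t : ℝ) ^ 2 := by gcongr
      _ ≤ (t : ℝ) ^ 3 := pow_le_pow_right₀ ht1.le (by norm_num)
  calc (ramseyClique 4 t : ℝ) ≤ 7200 * (t : ℝ) ^ 3 / (Real.log t) ^ 2 + 1 := h1.trans h2
    _ ≤ 7200 * (t : ℝ) ^ 3 / (Real.log t) ^ 2 + (t : ℝ) ^ 3 / (Real.log t) ^ 2 := by gcongr
    _ = _ := by ring

/-- There exists `c₂ > 0` such that for all integers `t ≥ 3`,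
`r(4,t) ≤ c₂ · t³ / (log t)²`. -/
theorem ramsey_four_t_upper :
    ∃ c₂ : ℝ, 0 < c₂ ∧ ∀ t : ℕ, 3 ≤ t →
      (ramseyClique 4 t : ℝ) ≤ c₂ * (t : ℝ) ^ 3 / (Real.log t) ^ 2 := by
  obtain ⟨T, hT⟩ : ∃ T, T = 32 ^ 4 := ⟨_, rfl⟩
  set g : ℕ → ℝ := fun t => (ramseyClique 4 t : ℝ) * (Real.log t) ^ 2 / (t : ℝ) ^ 3 with hg
  have hg0 : ∀ t, 0 ≤ g t := fun t => by positivity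
  have hsum : 0 ≤ ∑ s ∈ range T, g s := sum_nonneg fun s _ => hg0 s
  -- The finitely many small `t` are absorbed into the constant.
  refine ⟨7201 + ∑ s ∈ range T, g s, by positivity, fun t ht => ?_⟩
  have ht1 : (1 : ℝ) < t := by exact_mod_cast lt_of_lt_of_le (by norm_num) ht
  have hlog : 0 < Real.log t := Real.log_pos ht1
  rcases le_or_gt T t with h | h
  · refine (ramsey_large (hT ▸ h)).trans ?_
    gcongr
    linarith
  · have h1 : g t ≤ ∑ s ∈ range T, g s :=
      single_le_sum (fun s _ => hg0 s) (mem_range.2 h)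
    rw [le_div_iff₀ (by positivity), ← div_le_iff₀ (by positivity)]
    change g t ≤ _
    linarith
end

section
/- There exist a constant c > 0 and an integer t₀ such that for all t ≥ t₀, the cycle-complete Ramsey number satisfies r(C₆,t) ≥ c · t^{5/4}/(log t)^{1/2}, where C₆ is the cycle of length 6. -/
/-- `G` contains no subgraph isomorphic to `F`, i.e. there is no injective graph
homomorphism from `F` to `G`. -/
def FFree {α β : Type*} (F : SimpleGraph α) (G : SimpleGraph β) : Prop :=
  ¬ ∃ f : F →g G, Function.Injective f

/-- The Ramsey number `r(F,t)`: the minimum `n` such that every `F`-free graph on `n`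
vertices contains an independent set of size `t`. -/
noncomputable def ramseyF {α : Type*} (F : SimpleGraph α) (t : ℕ) : ℕ :=
  sInf {n : ℕ | ∀ G : SimpleGraph (Fin n), FFree F G →
    ∃ I : Finset (Fin n), I.card = t ∧ IsIndepFinset G I}

/-! ### The quadrangle and its polarity graph -/

open Finset in
/-- Cauchy–Schwarz in variance form. If every row of `K` sums to `r`, the weight of `K` between `U`
and `B` deviates from `c * #B` by an amount controlled by the pair correlations
`∑ v, K u v * K u' v` of rows indexed by `U`. With `c = #U * r / #V` this plays the role of an
eigenvalue bound. -/
theorem sq_sum_dev_le {V : Type*} [Fintype V] (K : V → V → ℝ) (U B : Finset V) (r c : ℝ)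
    (hr : ∀ u, ∑ v, K u v = r) :
    (∑ v ∈ B, (∑ u ∈ U, K u v - c)) ^ 2 ≤
      #B * (∑ u ∈ U, ∑ u' ∈ U, ∑ v, K u v * K u' v - 2 * c * (#U * r)
        + c ^ 2 * Fintype.card V) := by
  have h1 : (∑ v ∈ B, (∑ u ∈ U, K u v - c)) ^ 2
      ≤ #B * ∑ v ∈ B, (∑ u ∈ U, K u v - c) ^ 2 := sq_sum_le_card_mul_sum_sq
  refine h1.trans (mul_le_mul_of_nonneg_left ?_ (by positivity))
  have h2 : ∑ v ∈ B, (∑ u ∈ U, K u v - c) ^ 2 ≤ ∑ v, (∑ u ∈ U, K u v - c) ^ 2 :=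
    sum_le_sum_of_subset_of_nonneg (subset_univ _) (fun _ _ _ => sq_nonneg _)
  refine h2.trans (le_of_eq ?_)
  have h3 : ∑ v, ∑ u ∈ U, K u v = #U * r := by
    rw [sum_comm]; simp [hr]
  have h4 : ∑ v, (∑ u ∈ U, K u v) ^ 2 = ∑ u ∈ U, ∑ u' ∈ U, ∑ v, K u v * K u' v := by
    simp_rw [sq, sum_mul_sum]
    rw [sum_comm]
    refine sum_congr rfl fun u _ => ?_
    rw [sum_comm]
  rw [← h4, ← h3]
  simp_rw [sub_sq, sum_add_distrib, sum_sub_distrib]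
  simp [mul_sum, mul_comm, mul_left_comm]

section Quadrangle

variable {F : Type*} [Field F] [CharP F 2] (σ : F ≃+* F)

/-- Incidence of the point `u = (x, y, w)` with the line `v = (x', y', w')` in an affine model of the
symplectic generalized quadrangle: `y + w' = x * σ x'` and `y' + w = x' * σ x`. Lines are given the
same coordinates as points through the polarity defined by `σ`, so that the relation is symmetric. -/
def Inc (u v : F × F × F) : Prop :=
  u.2.1 + v.2.2 = u.1 * σ v.1 ∧ v.2.1 + u.2.2 = v.1 * σ u.1

/-- The polarity graph on `F³`: distinct `u`, `v` are adjacent when the point `u` lies on the line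
`v`. -/
def polGraph : SimpleGraph (F × F × F) where
  Adj u v := u ≠ v ∧ Inc σ u v
  symm := ⟨fun _ _ h => ⟨h.1.symm, h.2.2, h.2.1⟩⟩
  loopless := ⟨fun _ h => h.1 rfl⟩

/-- Two points with distinct first coordinates are collinear. When `σ ∘ σ` is squaring, this
equation characterizes the pairs of distinct points on a common line; only the direction
`Inc.coll` is needed. -/
def Coll (u v : F × F × F) : Prop :=
  u.1 ≠ v.1 ∧ σ (u.2.2 + v.2.2) = (u.1 + v.1) * (u.2.1 + v.2.1)

variable {σ}

omit [CharP F 2] in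
theorem Inc.symm {u v : F × F × F} (h : Inc σ u v) : Inc σ v u := ⟨h.2, h.1⟩

theorem Inc.sub {u u' v : F × F × F} (h : Inc σ u v) (h' : Inc σ u' v) :
    u.2.1 + u'.2.1 = (u.1 + u'.1) * σ v.1 ∧ u.2.2 + u'.2.2 = v.1 * σ (u.1 + u'.1) := by
  obtain ⟨a, b⟩ := h
  obtain ⟨a', b'⟩ := h'
  have h2 : (2 : F) = 0 := CharTwo.two_eq_zero
  constructor
  · linear_combination a + a' - v.2.2 * h2
  · rw [map_add]; linear_combination b + b' - v.2.1 * h2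

omit [CharP F 2] in
theorem Inc.eq_left {u u' v : F × F × F} (h : Inc σ u v) (h' : Inc σ u' v) (hx : u.1 = u'.1) :
    u = u' := by
  obtain ⟨a, b⟩ := h
  obtain ⟨a', b'⟩ := h'
  refine Prod.ext hx (Prod.ext ?_ ?_)
  · rw [hx, ← a'] at a; exact add_right_cancel a
  · rw [hx, ← b'] at b; exact add_left_cancel b

variable (hσ : ∀ x, σ (σ x) = x ^ 2)
include hσ

/-- The quadrangle contains no triangles. Subtracting incidences expresses the differences of the
second and third coordinates of the points through those of their first coordinates; applying `σ`
to the latter and using `σ ∘ σ = (· ^ 2)` leaves a product of three differences equal to zero. -/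
theorem no_triangle {p₁ p₂ p₃ l₁ l₂ l₃ : F × F × F}
    (h11 : Inc σ p₁ l₁) (h21 : Inc σ p₂ l₁) (h22 : Inc σ p₂ l₂) (h32 : Inc σ p₃ l₂)
    (h33 : Inc σ p₃ l₃) (h13 : Inc σ p₁ l₃) (h12 : p₁ ≠ p₂) (h31 : p₁ ≠ p₃)
    (hl : l₁ ≠ l₃) : False := by
  have h2 : (2 : F) = 0 := CharTwo.two_eq_zero
  obtain ⟨a1, b1⟩ := h11.sub h21
  obtain ⟨a2, b2⟩ := h22.sub h32
  obtain ⟨a3, b3⟩ := h33.sub h13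
  have e1 := congrArg σ b1
  have e2 := congrArg σ b2
  have e3 := congrArg σ b3
  simp only [map_add, map_mul, hσ] at e1 e2 e3
  have key : (p₁.1 + p₂.1) * ((p₁.1 + p₃.1) * (σ l₁.1 + σ l₃.1)) = 0 := by
    clear h11 h21 h22 h32 h33 h13 b1 b2 b3
    grind
  rcases mul_eq_zero.1 key with h | h
  · exact h12 (h11.eq_left h21 (CharTwo.add_eq_zero.1 h))
  rcases mul_eq_zero.1 h with h | h
  · exact h31 (h13.eq_left h33 (CharTwo.add_eq_zero.1 h))
  · have := σ.injective (CharTwo.add_eq_zero.1 h)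
    exact hl (h11.symm.eq_left h13.symm this)

theorem Inc.coll {u u' v : F × F × F} (h : Inc σ u v) (h' : Inc σ u' v) (hne : u ≠ u') :
    Coll σ u u' := by
  refine ⟨fun hx => hne (h.eq_left h' hx), ?_⟩
  obtain ⟨a, b⟩ := h.sub h'
  rw [b, a, map_mul, hσ]; ring

/-- A hexagon in the polarity graph would be a triangle of the quadrangle, its vertices being
alternately read as points and as lines. -/
theorem c6_free : FFree (SimpleGraph.cycleGraph 6) (polGraph σ) := by
  rintro ⟨f, hf⟩
  have h : ∀ i j : Fin 6, (SimpleGraph.cycleGraph 6).Adj i j → Inc σ (f i) (f j) :=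
    fun i j hij => (f.map_rel hij).2
  have ha : ∀ i j : Fin 6, i - j = 1 ∨ j - i = 1 → Inc σ (f i) (f j) :=
    fun i j hij => h i j (SimpleGraph.cycleGraph_adj.2 hij)
  exact no_triangle hσ (ha 0 1 (by decide)) (ha 2 1 (by decide)) (ha 2 3 (by decide))
    (ha 4 3 (by decide)) (ha 4 5 (by decide)) (ha 0 5 (by decide))
    (fun e => absurd (hf e) (by decide)) (fun e => absurd (hf e) (by decide))
    (fun e => absurd (hf e) (by decide))

variable [Fintype F]

open Finset Classical in
omit hσ [CharP F 2] in
theorem card_inc (u : F × F × F) : #{v | Inc σ u v} = Fintype.card F := by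
  have : ({v | Inc σ u v} : Finset (F × F × F))
      = univ.image fun x : F => (x, x * σ u.1 - u.2.2, u.1 * σ x - u.2.1) := by
    ext ⟨x, y, w⟩
    simp only [mem_filter, mem_univ, true_and, mem_image, Prod.mk.injEq]
    constructor
    · rintro ⟨h1, h2⟩
      exact ⟨x, rfl, by rw [← h2]; ring, by rw [← h1]; ring⟩
    · rintro ⟨x', rfl, rfl, rfl⟩
      constructor <;> ring
  rw [this, card_image_of_injective _ fun a b h => congrArg Prod.fst h, card_univ]

open Finset Classical in
theorem card_inc_inter_le {u u' : F × F × F} (hne : u ≠ u') :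
    #{v | Inc σ u v ∧ Inc σ u' v} ≤ if Coll σ u u' then 1 else 0 := by
  by_cases h : ∃ v, Inc σ u v ∧ Inc σ u' v
  · obtain ⟨v, hv, hv'⟩ := h
    rw [if_pos (hv.coll hσ hv' hne), card_le_one]
    simp only [mem_filter, mem_univ, true_and, and_imp]
    intro a ha ha' b hb hb'
    have h1 := (ha.sub ha').1.symm.trans (hb.sub hb').1
    refine ha.symm.eq_left hb.symm (σ.injective (mul_left_cancel₀ ?_ h1))
    exact fun e => hne (ha.eq_left ha' (CharTwo.add_eq_zero.1 e))
  · push Not at h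
    rw [filter_false_of_mem fun v _ hv => h v hv.1 hv.2]
    simp

open Finset Classical in
omit hσ [CharP F 2] in
theorem card_coll (u : F × F × F) :
    #{v | Coll σ u v} = (Fintype.card F - 1) * Fintype.card F := by
  have : ({v | Coll σ u v} : Finset (F × F × F))
      = ((univ.erase u.1) ×ˢ univ).image fun p : F × F =>
          (p.1, p.2, σ.symm ((u.1 + p.1) * (u.2.1 + p.2)) - u.2.2) := by
    ext ⟨x, y, w⟩
    simp only [mem_filter, mem_univ, true_and, mem_image, Prod.mk.injEq, mem_product,
      and_true, mem_erase, Prod.exists]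
    constructor
    · rintro ⟨h1, h2⟩
      exact ⟨x, y, h1.symm, rfl, rfl, by rw [← h2]; simp⟩
    · rintro ⟨x', y', h, rfl, rfl, rfl⟩
      exact ⟨h.symm, by simp⟩
  rw [this, card_image_of_injective, card_product, card_erase_of_mem (mem_univ _), card_univ]
  rintro ⟨a, b⟩ ⟨c, d⟩ h
  simp only [Prod.mk.injEq] at h
  exact Prod.ext h.1 h.2.1

open Finset Classical in
omit hσ [CharP F 2] in
/-- Upper bound on the number of common collinear points: `q - 2` for points with distinct first
coordinates, `q` for distinct points sharing it, `(q - 1) * q` on the diagonal. -/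
theorem card_coll_inter_le (u u' : F × F × F) :
    (#{v | Coll σ u v ∧ Coll σ u' v} : ℝ) ≤ ((Fintype.card F : ℝ) - 2)
      + 2 * (if u.1 = u'.1 then 1 else 0) + (Fintype.card F : ℝ) ^ 2 * (if u = u' then 1 else 0) := by
  by_cases hu : u = u'
  · subst hu
    have h1 : 1 ≤ Fintype.card F := Fintype.card_pos
    have h2 : #{v | Coll σ u v ∧ Coll σ u v} = (Fintype.card F - 1) * Fintype.card F := by
      simp only [and_self]; exact card_coll u
    rw [h2]
    push_cast [h1]
    simp only [if_true]
    nlinarith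
  rw [if_neg hu]
  by_cases hx : u.1 = u'.1
  · rw [if_pos hx]
    have : #{v | Coll σ u v ∧ Coll σ u' v} ≤ #(univ : Finset F) := by
      refine card_le_card_of_injOn (fun v => v.2.1) (fun _ _ => mem_univ _) ?_
      rintro a ha b hb hab
      simp only [coe_filter, mem_univ, true_and, Set.mem_ofPred_eq] at ha hb hab
      simp only [Coll, map_add] at ha hb
      obtain ⟨⟨a1, a2⟩, a3, a4⟩ := ha
      obtain ⟨⟨b1, b2⟩, b3, b4⟩ := hb
      have hy : u.2.1 - u'.2.1 ≠ 0 := by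
        intro h
        have hy := sub_eq_zero.1 h
        rw [← hx, ← hy, ← a2] at a4
        exact hu (Prod.ext hx (Prod.ext hy (σ.injective (add_right_cancel a4)).symm))
      have hfst : a.1 = b.1 := by
        apply mul_left_cancel₀ hy
        rw [← hx, ← hab] at b4
        rw [← hab] at b2
        rw [← hx] at a4
        linear_combination b2 - b4 - a2 + a4
      refine Prod.ext hfst (Prod.ext hab ?_)
      rw [hfst, hab, ← b2] at a2
      exact σ.injective (add_left_cancel a2)
    rw [card_univ] at this
    have : (#{v | Coll σ u v ∧ Coll σ u' v} : ℝ) ≤ Fintype.card F := by exact_mod_cast this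
    linarith
  · rw [if_neg hx]
    have : #{v | Coll σ u v ∧ Coll σ u' v} ≤ #((univ.erase u.1).erase u'.1) := by
      refine card_le_card_of_injOn (fun v => v.1) ?_ ?_
      · rintro a ha
        simp only [coe_filter, mem_univ, true_and, Set.mem_ofPred_eq] at ha
        simp [ha.1.1.symm, ha.2.1.symm]
      rintro a ha b hb hab
      simp only [coe_filter, mem_univ, true_and, Set.mem_ofPred_eq] at ha hb hab
      simp only [Coll, map_add] at ha hb
      obtain ⟨⟨a1, a2⟩, a3, a4⟩ := ha
      obtain ⟨⟨b1, b2⟩, b3, b4⟩ := hb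
      have hX : u.1 - u'.1 ≠ 0 := sub_ne_zero.2 hx
      have hy : a.2.1 = b.2.1 := by
        apply mul_left_cancel₀ hX
        rw [← hab] at b2 b4
        linear_combination b2 - b4 - a2 + a4
      refine Prod.ext hab (Prod.ext hy ?_)
      rw [hab, hy, ← b2] at a2
      exact σ.injective (add_left_cancel a2)
    rw [card_erase_of_mem (by simp [Ne.symm hx]), card_erase_of_mem (mem_univ _), card_univ] at this
    have h2 : 2 ≤ Fintype.card F := Fintype.one_lt_card
    have h3 : #{v | Coll σ u v ∧ Coll σ u' v} + 2 ≤ Fintype.card F := by omega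
    have : (#{v | Coll σ u v ∧ Coll σ u' v} : ℝ) + 2 ≤ Fintype.card F := by exact_mod_cast h3
    linarith

open Finset Classical in
omit hσ [CharP F 2] in
/-- The number of collinear ordered pairs in `U` is at most its expected value plus an error linear
in `#U`. -/
theorem coll_pairs_le (U : Finset (F × F × F)) :
    ∑ v ∈ U, ∑ u ∈ U, (if Coll σ u v then (1 : ℝ) else 0)
      ≤ (#U : ℝ) ^ 2 / Fintype.card F + 2 * Fintype.card F * #U := by
  set q : ℝ := (Fintype.card F : ℝ) with hq
  set m : ℝ := (#U : ℝ) with hm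
  have hq1 : 1 ≤ Fintype.card F := Fintype.card_pos
  have hq0 : 0 < q := by rw [hq]; exact_mod_cast hq1
  have hm0 : 0 ≤ m := by positivity
  have main := sq_sum_dev_le (fun u v => if Coll σ u v then (1 : ℝ) else 0) U U ((q - 1) * q)
    (m / q) (fun u => by
      rw [sum_boole, card_coll u]; push_cast [hq1]; rfl)
  have hsame : ∀ u : F × F × F, ∑ u' ∈ U, (if u.1 = u'.1 then (1 : ℝ) else 0) ≤ q ^ 2 := by
    intro u
    refine (sum_le_sum_of_subset_of_nonneg (subset_univ U)
      (fun _ _ _ => by split_ifs <;> norm_num)).trans ?_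
    rw [Fintype.sum_prod_type]
    simp_rw [Fintype.sum_prod_type]
    change ∑ x : F, ∑ _y : F, ∑ _w : F, (if u.1 = x then (1 : ℝ) else 0) ≤ q ^ 2
    simp only [sum_const, card_univ, nsmul_eq_mul, ← mul_sum, sum_ite_eq, mem_univ, if_true,
      mul_one, sq, hq, le_refl]
  have h2 : ∑ u ∈ U, ∑ u' ∈ U, ∑ v, (if Coll σ u v then (1 : ℝ) else 0)
      * (if Coll σ u' v then (1 : ℝ) else 0) ≤ m * ((q - 2) * m + 2 * q ^ 2 + q ^ 2) := by
    rw [hm, ← nsmul_eq_mul]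
    refine sum_le_card_nsmul _ _ _ fun u hu => ?_
    have : ∑ u' ∈ U, ∑ v, (if Coll σ u v then (1 : ℝ) else 0)
        * (if Coll σ u' v then (1 : ℝ) else 0)
        ≤ ∑ u' ∈ U, ((q - 2) + 2 * (if u.1 = u'.1 then 1 else 0)
          + q ^ 2 * (if u = u' then 1 else 0)) := by
      refine sum_le_sum fun u' _ => ?_
      refine le_trans (le_of_eq ?_) (card_coll_inter_le (σ := σ) u u')
      simp only [← ite_and, mul_ite, mul_one, mul_zero]
      rw [sum_boole]
      congr 2
      ext v
      simp [and_comm]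
    refine this.trans ?_
    simp only [sum_add_distrib, sum_const, ← mul_sum, nsmul_eq_mul, sum_ite_eq, hu, if_true]
    have := hsame u
    linarith
  have hV : (Fintype.card (F × F × F) : ℝ) = q ^ 3 := by
    simp only [Fintype.card_prod]; push_cast; ring
  rw [hV] at main
  simp only [sum_sub_distrib, sum_const, nsmul_eq_mul, ← hm] at main
  set E : ℝ := ∑ v ∈ U, ∑ u ∈ U, (if Coll σ u v then (1 : ℝ) else 0) with hE
  have h3 : (E - m * (m / q)) ^ 2 ≤ m * (3 * q ^ 2 * m) := by
    refine main.trans (mul_le_mul_of_nonneg_left ?_ hm0)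
    have e1 : 2 * (m / q) * (m * ((q - 1) * q)) = 2 * m ^ 2 * (q - 1) := by field_simp
    have e2 : (m / q) ^ 2 * q ^ 3 = m ^ 2 * q := by field_simp
    rw [e1, e2]
    linarith
  have h4 : E - m * (m / q) ≤ 2 * q * m := by
    apply abs_le_of_sq_le_sq' _ (by positivity) |>.2
    refine h3.trans ?_
    have := sq_nonneg (q * m)
    nlinarith
  have : m ^ 2 / q = m * (m / q) := by ring
  rw [this]; linarith

open Finset Classical in
/-- The number of incident pairs in `U` is `#U ^ 2 / q ^ 2` up to `√(3 q) * #U`: the row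
correlations of incidence are bounded by collinearity, so `coll_pairs_le` bounds the variance. -/
theorem inc_pairs_dev (U : Finset (F × F × F)) :
    (∑ v ∈ U, ∑ u ∈ U, (if Inc σ u v then (1 : ℝ) else 0)
      - (#U : ℝ) ^ 2 / (Fintype.card F : ℝ) ^ 2) ^ 2 ≤ 3 * Fintype.card F * (#U : ℝ) ^ 2 := by
  have hc := coll_pairs_le (σ := σ) U
  set q : ℝ := (Fintype.card F : ℝ) with hq
  set m : ℝ := (#U : ℝ) with hm
  have hq1 : 1 ≤ Fintype.card F := Fintype.card_pos
  have hq0 : 0 < q := by rw [hq]; exact_mod_cast hq1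
  have hm0 : 0 ≤ m := by positivity
  have main := sq_sum_dev_le (fun u v => if Inc σ u v then (1 : ℝ) else 0) U U q
    (m / q ^ 2) (fun u => by
      rw [sum_boole, card_inc u])
  have h2 : ∑ u ∈ U, ∑ u' ∈ U, ∑ v, (if Inc σ u v then (1 : ℝ) else 0)
      * (if Inc σ u' v then (1 : ℝ) else 0)
      ≤ q * m + ∑ u ∈ U, ∑ u' ∈ U, (if Coll σ u u' then (1 : ℝ) else 0) := by
    have e : q * m = ∑ u ∈ U, q := by simp [hm, mul_comm]
    rw [e, ← sum_add_distrib]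
    refine sum_le_sum fun u hu => ?_
    have : ∑ u' ∈ U, ∑ v, (if Inc σ u v then (1 : ℝ) else 0)
        * (if Inc σ u' v then (1 : ℝ) else 0)
        ≤ ∑ u' ∈ U, (q * (if u = u' then 1 else 0) + (if Coll σ u u' then (1 : ℝ) else 0)) := by
      refine sum_le_sum fun u' _ => ?_
      have e2 : ∑ v, (if Inc σ u v then (1 : ℝ) else 0) * (if Inc σ u' v then (1 : ℝ) else 0)
          = #{v | Inc σ u v ∧ Inc σ u' v} := by
        simp only [← ite_and, mul_ite, mul_one, mul_zero]
        rw [sum_boole]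
        congr 2
        ext v
        simp [and_comm]
      rw [e2]
      by_cases h : u = u'
      · subst h
        simp only [and_self, card_inc, if_true, mul_one]
        exact le_add_of_nonneg_right (by split_ifs <;> norm_num)
      · rw [if_neg h, mul_zero, zero_add]
        exact_mod_cast card_inc_inter_le hσ h
    refine this.trans (le_of_eq ?_)
    simp only [sum_add_distrib, ← mul_sum, sum_ite_eq, hu, if_true, mul_one]
  have hV : (Fintype.card (F × F × F) : ℝ) = q ^ 3 := by
    simp only [Fintype.card_prod]; push_cast; ring
  rw [hV] at main
  rw [sum_comm] at hc
  simp only [sum_sub_distrib, sum_const, nsmul_eq_mul, ← hm] at main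
  have e1 : 2 * (m / q ^ 2) * (m * q) = 2 * (m ^ 2 / q) := by field_simp
  have e2 : (m / q ^ 2) ^ 2 * q ^ 3 = m ^ 2 / q := by field_simp
  have e3 : m ^ 2 / q ^ 2 = m * (m / q ^ 2) := by ring
  rw [e1, e2] at main
  rw [e3]
  refine main.trans ?_
  have : 3 * q * m ^ 2 = m * (3 * q * m) := by ring
  rw [this]
  refine mul_le_mul_of_nonneg_left ?_ hm0
  linarith

open Finset Classical in
/-- Every large set `U` spans a vertex whose degree inside `U` is at least half the expected
`#U / q ^ 2`. -/
theorem exists_large_degree_s3 (U : Finset (F × F × F)) (h1 : 6 * Fintype.card F ^ 2 ≤ #U)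
    (h2 : 32 * Fintype.card F ^ 5 ≤ #U ^ 2) :
    ∃ v ∈ U, #U ≤ 2 * Fintype.card F ^ 2 * #{u ∈ U | (polGraph σ).Adj v u} := by
  by_contra! hcon
  have hdev := inc_pairs_dev hσ U
  have hq1 : 1 ≤ Fintype.card F := Fintype.card_pos
  have h1' : (6 : ℝ) * (Fintype.card F : ℝ) ^ 2 ≤ #U := by exact_mod_cast h1
  have h2' : (32 : ℝ) * (Fintype.card F : ℝ) ^ 5 ≤ (#U : ℝ) ^ 2 := by exact_mod_cast h2
  have hcon' : ∀ v ∈ U, ∑ u ∈ U, (if Inc σ u v then (1 : ℝ) else 0)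
      ≤ (#U : ℝ) / (2 * (Fintype.card F : ℝ) ^ 2) + 1 := by
    intro v hv
    have hc : (2 : ℝ) * (Fintype.card F : ℝ) ^ 2 * #{u ∈ U | (polGraph σ).Adj v u} < #U := by
      exact_mod_cast hcon v hv
    have hsub : {u ∈ U | Inc σ u v} ⊆ insert v {u ∈ U | (polGraph σ).Adj v u} := by
      intro u hu
      rw [mem_filter] at hu
      by_cases huv : u = v
      · simp [huv]
      · exact mem_insert_of_mem (mem_filter.2 ⟨hu.1, fun e => huv e.symm, hu.2.symm⟩)
    have hcard := (card_le_card hsub).trans (card_insert_le _ _)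
    have hcard' : (#{u ∈ U | Inc σ u v} : ℝ) ≤ #{u ∈ U | (polGraph σ).Adj v u} + 1 := by
      exact_mod_cast hcard
    rw [sum_boole]
    refine hcard'.trans (add_le_add_left ?_ 1)
    rw [le_div_iff₀ (by positivity)]
    linarith
  have hE := sum_le_card_nsmul _ _ _ hcon'
  rw [nsmul_eq_mul] at hE
  set q : ℝ := (Fintype.card F : ℝ) with hq
  set m : ℝ := (#U : ℝ) with hm
  set E : ℝ := ∑ v ∈ U, ∑ u ∈ U, (if Inc σ u v then (1 : ℝ) else 0)
  have hq0 : 1 ≤ q := by rw [hq]; exact_mod_cast hq1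
  have hm0 : 0 < m := by nlinarith
  set X := m ^ 2 / q ^ 2 with hX
  have h3 : m ≤ X / 6 := by
    rw [hX, div_div, le_div_iff₀ (by positivity)]; nlinarith
  have h4 : E ≤ X / 2 + m := by
    refine hE.trans (le_of_eq ?_)
    rw [hX]; field_simp
  have h5 : (X / 3) ^ 2 ≤ 3 * q * m ^ 2 := by
    refine le_trans ?_ hdev
    rw [← neg_sq (E - X)]
    have : 0 ≤ X := by positivity
    exact pow_le_pow_left₀ (by positivity) (by linarith) 2
  have h6 : X * q ^ 2 = m ^ 2 := by rw [hX]; field_simp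
  have h7 : m ^ 2 * m ^ 2 ≤ 27 * q ^ 5 * m ^ 2 := by
    have := mul_le_mul_of_nonneg_right h5 (by positivity : 0 ≤ 9 * q ^ 4)
    calc m ^ 2 * m ^ 2 = (X / 3) ^ 2 * (9 * q ^ 4) := by rw [← h6]; ring
      _ ≤ _ := this
      _ = _ := by ring
  have h8 := le_of_mul_le_mul_right h7 (by positivity)
  have : 0 < q ^ 5 := by positivity
  linarith

end Quadrangle

/-! ### Counting independent sets and sampling -/

section Counting

open Finset Classical

variable {V : Type*} (G : SimpleGraph V)

/-- The independence polynomial of the graph induced on `R`, evaluated at `p`. -/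
noncomputable def indSum (p : ℝ) (R : Finset V) : ℝ :=
  ∑ I ∈ R.powerset, if IsIndepFinset G I then p ^ #I else 0

theorem indSum_le_one_add_pow {p : ℝ} (hp : 0 ≤ p) (R : Finset V) :
    indSum G p R ≤ (1 + p) ^ #R := by
  have h : (p + 1) ^ #R = ∑ I ∈ R.powerset, p ^ #I := by
    rw [← prod_const, prod_add]
    simp
  rw [add_comm, h]
  refine sum_le_sum fun I _ => ?_
  split_ifs
  · exact le_rfl
  · positivity

/-- The deletion step for the independence polynomial, splitting by whether `v` is chosen. -/
theorem indSum_le_erase {p : ℝ} (hp : 0 ≤ p) {R : Finset V} {v : V} (hv : v ∈ R) :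
    indSum G p R ≤ indSum G p (R.erase v) +
      p * indSum G p ((R.erase v).filter fun u => ¬ G.Adj v u) := by
  have hR : R = insert v (R.erase v) := (insert_erase hv).symm
  set R₀ := R.erase v with hR₀
  have hv0 : v ∉ R₀ := notMem_erase v R
  unfold indSum
  rw [hR, sum_powerset_insert hv0]
  refine add_le_add le_rfl ?_
  rw [← sum_subset (powerset_mono.2 (filter_subset (fun u => ¬ G.Adj v u) R₀)), mul_sum]
  · refine sum_le_sum fun I hI => ?_
    have hvI : v ∉ I := fun h => hv0 (mem_of_mem_filter _ (mem_powerset.1 hI h))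
    by_cases hind : IsIndepFinset G I
    · rw [if_pos hind, card_insert_of_notMem hvI, pow_succ']
      split_ifs
      · exact le_rfl
      · positivity
    · rw [if_neg hind, if_neg, mul_zero]
      exact fun h => hind fun a ha b hb => h a (mem_insert_of_mem ha) b (mem_insert_of_mem hb)
  · intro I hI hI'
    rw [mem_powerset] at hI hI'
    refine if_neg fun h => hI' fun a ha => mem_filter.2 ⟨hI ha, ?_⟩
    exact h v (mem_insert_self _ _) a (mem_insert_of_mem ha)

/-- Kleitman–Winston counting. As long as more than `M` vertices remain, some vertex `v` has relative
degree at least `1 / D`: choosing `v` shrinks the set by the factor `1 - 1 / D`, not choosing it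
removes one vertex. At most `L` vertices can thus be chosen before at most `M` vertices remain. -/
theorem indSum_le {M D : ℕ} (hD : 0 < D)
    (hdeg : ∀ R : Finset V, M < #R → ∃ v ∈ R, #R ≤ D * #{u ∈ R | G.Adj v u})
    {p : ℝ} (hp : 0 ≤ p) (hp1 : p ≤ 1) (L : ℕ) (R : Finset V)
    (hL : (#R : ℝ) * (1 - 1 / (D : ℝ)) ^ L ≤ M) :
    indSum G p R ≤ (1 + p) ^ M * (1 + (#R : ℝ)) ^ L := by
  induction hn : #R using Nat.strong_induction_on generalizing R L with
  | _ n ih =>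
  have hn' : (#R : ℝ) = n := by exact_mod_cast hn
  by_cases hM : #R ≤ M
  · calc indSum G p R ≤ (1 + p) ^ #R := indSum_le_one_add_pow G hp R
      _ ≤ (1 + p) ^ M := pow_le_pow_right₀ (by linarith) hM
      _ ≤ (1 + p) ^ M * (1 + (n : ℝ)) ^ L :=
        le_mul_of_one_le_right (by positivity) (one_le_pow₀ (by simp))
  push Not at hM
  have hD1 : (1 : ℝ) / D ≤ 1 := by
    rw [div_le_one (by exact_mod_cast hD)]; exact_mod_cast hD
  have hx0 : 0 ≤ 1 - 1 / (D : ℝ) := by linarith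
  obtain _ | L := L
  · exfalso
    rw [pow_zero, mul_one] at hL
    exact absurd (by exact_mod_cast hL) (not_le.2 hM)
  obtain ⟨v, hv, hvdeg⟩ := hdeg R hM
  have hle := indSum_le_erase G hp hv
  have hc1 : #(R.erase v) = n - 1 := by rw [card_erase_of_mem hv, hn]
  have hnpos : 0 < n := by rw [← hn]; exact card_pos.2 ⟨v, hv⟩
  have hsubN : {u ∈ R.erase v | ¬ G.Adj v u} ⊆ {u ∈ R | ¬ G.Adj v u} :=
    filter_subset_filter _ (erase_subset _ _)
  have hc2 : (#{u ∈ R.erase v | ¬ G.Adj v u} : ℝ) ≤ #R * (1 - 1 / (D : ℝ)) := by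
    have h1 : (#{u ∈ R.erase v | ¬ G.Adj v u} : ℝ) + #{u ∈ R | G.Adj v u} ≤ #R := by
      have := card_le_card hsubN
      have h3 := card_filter_add_card_filter_not (s := R) (fun u => G.Adj v u)
      exact_mod_cast (by omega : #{u ∈ R.erase v | ¬ G.Adj v u} + #{u ∈ R | G.Adj v u} ≤ #R)
    have h2 : (#R : ℝ) / D ≤ #{u ∈ R | G.Adj v u} := by
      rw [div_le_iff₀ (by exact_mod_cast hD), mul_comm]
      exact_mod_cast hvdeg
    have : (#R : ℝ) * (1 - 1 / (D : ℝ)) = #R - #R / D := by ring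
    linarith
  have hc3 : #{u ∈ R.erase v | ¬ G.Adj v u} ≤ n - 1 := hc1 ▸ card_filter_le _ _
  have ih1 := ih (n - 1) (by omega) (L + 1) (R.erase v) (by
    refine le_trans ?_ hL
    gcongr
    exact erase_subset _ _) hc1
  have ih2 := ih _ (by omega) L {u ∈ R.erase v | ¬ G.Adj v u} (by
    refine le_trans ?_ hL
    calc _ ≤ #R * (1 - 1 / (D : ℝ)) * (1 - 1 / (D : ℝ)) ^ L := by gcongr
      _ = _ := by ring) rfl
  have hcast : (1 : ℝ) + ((n - 1 : ℕ) : ℝ) = n := by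
    push_cast [hnpos]; ring
  have hc3' : (1 : ℝ) + #{u ∈ R.erase v | ¬ G.Adj v u} ≤ n := by
    rw [← hcast]; gcongr
  rw [hcast] at ih1
  have ih2' : indSum G p {u ∈ R.erase v | ¬ G.Adj v u} ≤ (1 + p) ^ M * (n : ℝ) ^ L :=
    ih2.trans (by gcongr)
  have hP : 0 ≤ (1 + p) ^ M * (n : ℝ) ^ L := by positivity
  calc indSum G p R
      ≤ (1 + p) ^ M * (n : ℝ) ^ (L + 1) + p * ((1 + p) ^ M * (n : ℝ) ^ L) :=
        hle.trans (add_le_add ih1 (mul_le_mul_of_nonneg_left ih2' hp))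
    _ ≤ (1 + p) ^ M * (n : ℝ) ^ (L + 1) + 1 * ((1 + p) ^ M * (n : ℝ) ^ L) := by gcongr
    _ = (1 + p) ^ M * ((n : ℝ) ^ L * (1 + n)) := by ring
    _ ≤ (1 + p) ^ M * ((1 + (n : ℝ)) ^ L * (1 + n)) := by gcongr; linarith
    _ = _ := by ring

theorem card_indep_mul_pow_le (R : Finset V) {p : ℝ} (hp : 0 ≤ p) (t : ℕ) :
    #{I ∈ R.powersetCard t | IsIndepFinset G I} * p ^ t ≤ indSum G p R := by
  rw [indSum, ← sum_filter]
  have h : {I ∈ R.powersetCard t | IsIndepFinset G I} ⊆ {I ∈ R.powerset | IsIndepFinset G I} := by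
    refine filter_subset_filter _ fun I hI => ?_
    exact mem_powerset.2 (mem_powersetCard.1 hI).1
  refine le_trans (le_of_eq ?_)
    (sum_le_sum_of_subset_of_nonneg h fun _ _ _ => by positivity)
  rw [← nsmul_eq_mul]
  refine (sum_eq_card_nsmul fun I hI => ?_).symm
  rw [(mem_powersetCard.1 (mem_filter.1 hI).1).2]

/-- Some `N`-subset `W` of `A` contains at most a proportion `(N / #A) ^ t` of the `t`-sets in `𝓘`.
Elements of `A` are removed one at a time, each time doing at least as well as the average;
Bernoulli's inequality turns `1 - t / (N + 1)` into `(N / (N + 1)) ^ t`. -/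
theorem exists_subset_few {t : ℕ} (A : Finset V) (𝓘 : Finset (Finset V))
    (h𝓘 : ∀ I ∈ 𝓘, #I = t) (N : ℕ) (hN : N ≤ #A) (hN0 : 0 < N) :
    ∃ W ⊆ A, #W = N ∧
      (#{I ∈ 𝓘 | I ⊆ W} : ℝ) * (#A : ℝ) ^ t ≤ #𝓘 * (N : ℝ) ^ t := by
  induction hd : #A - N generalizing N with
  | zero =>
    obtain rfl : N = #A := by omega
    refine ⟨A, subset_rfl, rfl, ?_⟩
    gcongr
    exact filter_subset _ _
  | succ d ih =>
    obtain ⟨W, hWA, hWN, hW⟩ := ih (N + 1) (by omega) (by omega) (by omega)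
    -- average over the vertex `v` removed from `W`
    have hsum : ∑ v ∈ W, (#{I ∈ 𝓘 | I ⊆ W.erase v} : ℝ)
        = #{I ∈ 𝓘 | I ⊆ W} * ((N : ℝ) + 1 - t) := by
      have h1 : ∀ v ∈ W, (#{I ∈ 𝓘 | I ⊆ W.erase v} : ℝ)
          = ∑ I ∈ 𝓘 with I ⊆ W, if v ∉ I then (1 : ℝ) else 0 := by
        intro v hv
        rw [sum_boole, filter_filter]
        congr 2
        ext I
        simp [subset_erase]
      rw [sum_congr rfl h1, sum_comm, ← nsmul_eq_mul]
      refine sum_eq_card_nsmul fun I hI => ?_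
      rw [mem_filter] at hI
      rw [sum_boole]
      have h2 : {v ∈ W | v ∉ I} = W \ I := by ext; simp
      rw [h2, card_sdiff_of_subset hI.2, hWN, h𝓘 I hI.1, Nat.cast_sub]
      · push_cast; ring
      · rw [← h𝓘 I hI.1, ← hWN]; exact card_le_card hI.2
    have hne : W.Nonempty := card_pos.1 (by omega)
    obtain ⟨v, hv, hle⟩ := exists_le_of_sum_le (s := W) hne
      (f := fun v => (#{I ∈ 𝓘 | I ⊆ W.erase v} : ℝ))
      (g := fun _ => #{I ∈ 𝓘 | I ⊆ W} * (((N : ℝ) + 1 - t) / (N + 1))) (by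
        rw [hsum, sum_const, nsmul_eq_mul, hWN]
        push_cast
        apply le_of_eq
        field_simp)
    refine ⟨W.erase v, (erase_subset _ _).trans hWA, by rw [card_erase_of_mem hv, hWN]; rfl, ?_⟩
    have hbern : ((N : ℝ) + 1 - t) / (N + 1) ≤ ((N : ℝ) / (N + 1)) ^ t := by
      have h := one_add_mul_le_pow (a := -1 / ((N : ℝ) + 1)) (by
        rw [le_div_iff₀ (by positivity)]
        have : (0 : ℝ) ≤ N := by positivity
        linarith) t
      have hN1 : (N : ℝ) + 1 ≠ 0 := by positivity
      have e1 : ((N : ℝ) + 1 - t) / (N + 1) = 1 + t * (-1 / ((N : ℝ) + 1)) := by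
        field_simp; ring
      have e2 : (N : ℝ) / (N + 1) = 1 + -1 / ((N : ℝ) + 1) := by
        field_simp; ring
      rw [e1, e2]
      exact h
    calc (#{I ∈ 𝓘 | I ⊆ W.erase v} : ℝ) * (#A : ℝ) ^ t
        ≤ (#{I ∈ 𝓘 | I ⊆ W} * ((N : ℝ) / (N + 1)) ^ t) * (#A : ℝ) ^ t := by
          gcongr
          exact hle.trans (by gcongr)
      _ = (#{I ∈ 𝓘 | I ⊆ W} * (#A : ℝ) ^ t) * ((N : ℝ) / (N + 1)) ^ t := by ring
      _ ≤ (#𝓘 * ((N + 1 : ℕ) : ℝ) ^ t) * ((N : ℝ) / (N + 1)) ^ t := by gcongr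
      _ = #𝓘 * (N : ℝ) ^ t := by
          push_cast
          rw [div_pow]; field_simp

end Counting

/-! ### Ramsey numbers -/

section Ramsey

open Finset Classical

/-- Ramsey's theorem for two colours, inside a vertex set `A` of at least `n` elements. -/
theorem exists_ramsey (s t : ℕ) : ∃ n : ℕ, ∀ (V : Type) (G : SimpleGraph V) (A : Finset V),
    n ≤ #A → (∃ K ⊆ A, #K = s ∧ G.IsClique K) ∨ ∃ I ⊆ A, #I = t ∧ IsIndepFinset G I := by
  induction hk : s + t generalizing s t with
  | zero =>
    obtain rfl : s = 0 := by omega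
    exact ⟨0, fun V G A _ => Or.inl ⟨∅, by simp, by simp, by simp⟩⟩
  | succ k ih =>
    obtain _ | s := s
    · exact ⟨0, fun V G A _ => Or.inl ⟨∅, by simp, by simp, by simp⟩⟩
    obtain _ | t := t
    · exact ⟨0, fun V G A _ => Or.inr ⟨∅, by simp, by simp, by simp [IsIndepFinset]⟩⟩
    obtain ⟨n₁, h₁⟩ := ih s (t + 1) (by omega)
    obtain ⟨n₂, h₂⟩ := ih (s + 1) t (by omega)
    refine ⟨n₁ + n₂ + 1, fun V G A hA => ?_⟩
    obtain ⟨v, hv⟩ : A.Nonempty := card_pos.1 (by omega)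
    have hcard := card_filter_add_card_filter_not (s := A.erase v) (fun u => G.Adj v u)
    rw [card_erase_of_mem hv] at hcard
    have hsub : ∀ (P : V → Prop) [DecidablePred P], {u ∈ A.erase v | P u} ⊆ A := fun P _ =>
      (filter_subset _ _).trans (erase_subset _ _)
    have hmem : ∀ (P : V → Prop) [DecidablePred P] (T : Finset V), T ⊆ {u ∈ A.erase v | P u} →
        insert v T ⊆ A ∧ #(insert v T) = #T + 1 ∧ ∀ x ∈ T, P x := by
      intro P _ T hT
      refine ⟨insert_subset hv (hT.trans (hsub P)), card_insert_of_notMem fun h => ?_,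
        fun x hx => (mem_filter.1 (hT hx)).2⟩
      simpa using hT h
    by_cases hN : n₁ ≤ #{u ∈ A.erase v | G.Adj v u}
    · obtain ⟨K, hK, hKs, hKc⟩ | ⟨I, hI, hIt⟩ := h₁ V G _ hN
      · obtain ⟨ha, hb, hc⟩ := hmem _ K hK
        refine Or.inl ⟨insert v K, ha, by omega, ?_⟩
        rw [coe_insert, SimpleGraph.isClique_insert]
        exact ⟨hKc, fun b hb _ => hc b hb⟩
      · exact Or.inr ⟨I, hI.trans (hsub _), hIt⟩
    · have hN2 : n₂ ≤ #{u ∈ A.erase v | ¬ G.Adj v u} := by omega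
      obtain ⟨K, hK, hKs⟩ | ⟨I, hI, hIt, hIi⟩ := h₂ V G _ hN2
      · exact Or.inl ⟨K, hK.trans (hsub fun u => ¬ G.Adj v u), hKs⟩
      · obtain ⟨ha, hb, hc⟩ := hmem (fun u => ¬ G.Adj v u) I hI
        refine Or.inr ⟨insert v I, ha, by omega, ?_⟩
        intro x hx y hy hxy
        rw [mem_insert] at hx hy
        obtain rfl | hx := hx <;> obtain rfl | hy := hy
        · exact G.irrefl hxy
        · exact hc y hy hxy
        · exact hc x hx hxy.symm
        · exact hIi x hx y hy hxy

/-- The infimum defining `r(C₆, t)` is over a nonempty set, so that `ramseyF` is not the junk value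
`sInf ∅ = 0`. -/
theorem ramsey_set_nonempty (t : ℕ) : {n : ℕ | ∀ G : SimpleGraph (Fin n),
    FFree (SimpleGraph.cycleGraph 6) G →
      ∃ I : Finset (Fin n), #I = t ∧ IsIndepFinset G I}.Nonempty := by
  obtain ⟨n, hn⟩ := exists_ramsey 6 t
  refine ⟨n, fun G hG => ?_⟩
  obtain ⟨K, -, hK6, hK⟩ | ⟨I, -, hI⟩ := hn (Fin n) G univ (by simp)
  · exfalso
    let e := (K.equivFinOfCardEq hK6).symm
    have he : Function.Injective fun i => (e i : Fin n) :=
      Subtype.val_injective.comp e.injective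
    exact hG ⟨⟨fun i => (e i : Fin n), fun {a b} hab =>
      hK (e a).2 (e b).2 fun h => hab.ne (he h)⟩, he⟩
  · exact ⟨I, hI⟩

/-- A vertex set without independent `t`-sets in a `C₆`-free graph bounds the Ramsey number from
below; every smaller number of vertices is excluded by restricting to a subset. -/
theorem lt_ramsey {V : Type*} (G : SimpleGraph V) (hG : FFree (SimpleGraph.cycleGraph 6) G)
    (W : Finset V) (t : ℕ) (hW : ∀ I ⊆ W, #I = t → ¬ IsIndepFinset G I) :
    #W < ramseyF (SimpleGraph.cycleGraph 6) t := by
  by_contra! hle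
  have hmem : ∀ G : SimpleGraph (Fin (ramseyF (SimpleGraph.cycleGraph 6) t)),
      FFree (SimpleGraph.cycleGraph 6) G → ∃ I : Finset (Fin _), #I = t ∧ IsIndepFinset G I :=
    Nat.sInf_mem (ramsey_set_nonempty t)
  let e : Fin (ramseyF (SimpleGraph.cycleGraph 6) t) ↪ V :=
    ((Fin.castLEEmb hle).trans W.equivFin.symm.toEmbedding).trans (Function.Embedding.subtype _)
  obtain ⟨I, hIt, hI⟩ := hmem (G.comap e) (by
    rintro ⟨f, hf⟩
    exact hG ⟨⟨fun i => e (f i), fun h => f.map_rel h⟩, e.injective.comp hf⟩)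
  refine hW (I.map e) ?_ (by rw [card_map, hIt]) ?_
  · intro x hx
    obtain ⟨i, -, rfl⟩ := mem_map.1 hx
    exact (W.equivFin.symm (Fin.castLEEmb hle i)).2
  · intro x hx y hy hxy
    obtain ⟨i, hi, rfl⟩ := mem_map.1 hx
    obtain ⟨j, hj, rfl⟩ := mem_map.1 hy
    exact hI i hi j hj hxy

end Ramsey

/-! ### Choice of parameters -/

section Final

open Finset Classical

/-- The field with `2 ^ (2 * e + 1)` elements has an automorphism whose square is the Frobenius map,
namely `x ↦ x ^ (2 ^ (e + 1))`. -/
theorem exists_field (e : ℕ) : ∃ (F : Type) (_ : Field F) (_ : CharP F 2) (_ : Fintype F)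
    (σ : F ≃+* F), (∀ x, σ (σ x) = x ^ 2) ∧ Fintype.card F = 2 ^ (2 * e + 1) := by
  let F := GaloisField 2 (2 * e + 1)
  have : Fintype F := Fintype.ofFinite F
  have hc : Fintype.card F = 2 ^ (2 * e + 1) := by
    rw [← Nat.card_eq_fintype_card, GaloisField.card 2 (2 * e + 1) (by omega)]
  refine ⟨F, inferInstance, inferInstance, this, iterateFrobeniusEquiv F 2 (e + 1), ?_, hc⟩
  intro x
  rw [iterateFrobeniusEquiv_def, iterateFrobeniusEquiv_def, ← pow_mul, ← pow_add]
  have h : (2 : ℕ) ^ (e + 1 + (e + 1)) = 2 ^ (2 * e + 1) * 2 := by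
    rw [← pow_succ]; congr 1; ring
  rw [h, pow_mul, ← hc, FiniteField.pow_card]

/-- The counting bound at the scale of the quadrangle: in a graph on `q ^ 3` vertices, `q = 2 ^ k`,
in which every set of more than `M` vertices spans a vertex of relative degree at least
`1 / (2 q ^ 2)`, there are at most `(6 M / t) ^ t` independent sets of size `t`. -/
theorem card_indep_le {V : Type*} [Fintype V] (G : SimpleGraph V) {M k q t : ℕ}
    (hV : #(univ : Finset V) = q ^ 3) (hq : q = 2 ^ k) (hk : 1 ≤ k) (hqM : q ^ 2 ≤ M)
    (ht : 8 * k ^ 2 * q ^ 2 ≤ t) (htM : t ≤ M)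
    (hdeg : ∀ R : Finset V, M < #R → ∃ v ∈ R, #R ≤ 2 * q ^ 2 * #{u ∈ R | G.Adj v u}) :
    (#{I ∈ (univ : Finset V).powersetCard t | IsIndepFinset G I} : ℝ) * ((t : ℝ) / M) ^ t
      ≤ 6 ^ t := by
  have hq0 : 0 < q := by rw [hq]; exact Nat.two_pow_pos k
  have hM0 : 0 < M := (pow_pos hq0 2).trans_le hqM
  obtain ⟨D, hD⟩ : ∃ D, D = 2 * q ^ 2 := ⟨_, rfl⟩
  rw [← hD] at hdeg
  have hD0 : 0 < D := by rw [hD]; positivity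
  have hM0' : (0 : ℝ) < M := by exact_mod_cast hM0
  have hD0' : (0 : ℝ) < D := by exact_mod_cast hD0
  set p : ℝ := (t : ℝ) / M with hp
  have hp0 : 0 ≤ p := by positivity
  have hp1 : p ≤ 1 := by rw [hp, div_le_one hM0']; exact_mod_cast htM
  have hx0 : (0 : ℝ) ≤ 1 - 1 / (D : ℝ) := by
    rw [sub_nonneg, div_le_one hD0']; exact_mod_cast hD0
  have hhalf : (1 - 1 / (D : ℝ)) ^ D ≤ 1 / 2 := by
    have h1 : (1 - 1 / (D : ℝ)) ^ D ≤ Real.exp (-1) := by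
      calc (1 - 1 / (D : ℝ)) ^ D ≤ (Real.exp (-(1 / (D : ℝ)))) ^ D :=
            pow_le_pow_left₀ hx0 (Real.one_sub_le_exp_neg _) D
        _ = Real.exp (-1) := by
            rw [← Real.exp_nat_mul]; congr 1; field_simp
    refine h1.trans ?_
    rw [Real.exp_neg, ← one_div]
    have := Real.add_one_le_exp (1 : ℝ)
    exact one_div_le_one_div_of_le (by norm_num) (by linarith)
  -- each of `k` blocks of `D` steps halves the set, which shrinks `q ^ 3` vertices to at most `q ^ 2`
  have hL : (#(univ : Finset V) : ℝ) * (1 - 1 / (D : ℝ)) ^ (D * k) ≤ M := by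
    rw [hV, pow_mul]
    calc ((q ^ 3 : ℕ) : ℝ) * ((1 - 1 / (D : ℝ)) ^ D) ^ k
        ≤ ((q ^ 3 : ℕ) : ℝ) * (1 / 2) ^ k := by gcongr
      _ = ((q ^ 2 : ℕ) : ℝ) := by
          rw [hq]; push_cast
          rw [one_div, inv_pow, ← div_eq_mul_inv, div_eq_iff (by positivity)]
          ring
      _ ≤ M := by exact_mod_cast hqM
  have hcount := (card_indep_mul_pow_le G univ hp0 t).trans
    (indSum_le G hD0 hdeg hp0 hp1 (D * k) univ hL)
  have hexp : (1 + p) ^ M ≤ 3 ^ t := by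
    calc (1 + p) ^ M ≤ (Real.exp p) ^ M := by
          gcongr; rw [add_comm]; exact Real.add_one_le_exp p
      _ = (Real.exp 1) ^ t := by
          rw [← Real.exp_nat_mul, ← Real.exp_nat_mul]; congr 1; rw [hp]; field_simp
      _ ≤ 3 ^ t := by
          gcongr; linarith [Real.exp_one_lt_d9]
  have hpoly : (1 + (#(univ : Finset V) : ℝ)) ^ (D * k) ≤ 2 ^ t := by
    have h2q : 2 ≤ q := by
      rw [hq]
      calc 2 = 2 ^ 1 := rfl
        _ ≤ 2 ^ k := Nat.pow_le_pow_right (by norm_num) hk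
    have h1 : 1 + #(univ : Finset V) ≤ q ^ 4 := by
      rw [hV]
      have h3 : 1 ≤ q ^ 3 := Nat.one_le_pow _ _ hq0
      calc 1 + q ^ 3 ≤ 2 * q ^ 3 := by omega
        _ ≤ q * q ^ 3 := Nat.mul_le_mul_right _ h2q
        _ = q ^ 4 := by ring
    have h2 : (1 + #(univ : Finset V)) ^ (D * k) ≤ 2 ^ t := by
      calc _ ≤ (q ^ 4) ^ (D * k) := Nat.pow_le_pow_left h1 _
        _ = 2 ^ (8 * k ^ 2 * q ^ 2) := by
          rw [hD, ← pow_mul]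
          generalize q ^ 2 = Q
          rw [hq, ← pow_mul]; congr 1; ring
        _ ≤ 2 ^ t := Nat.pow_le_pow_right (by norm_num) ht
    exact_mod_cast h2
  calc _ ≤ _ := hcount
    _ ≤ 3 ^ t * 2 ^ t := by gcongr
    _ = 6 ^ t := by rw [← mul_pow]; norm_num

/-- A graph with at most `(6 M / t) ^ t` independent `t`-sets has a set of `t / (8 M)` times the
number of its vertices that contains none of them: on average over such sets, at most
`(6 / 8) ^ t < 1` survive. -/
theorem exists_subset_none {V : Type*} [Fintype V] (G : SimpleGraph V) {M t N : ℕ} (ht0 : 0 < t)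
    (htM : t ≤ M) (hN0 : 0 < N) (hN : N * 8 * M = #(univ : Finset V) * t)
    (h6 : (#{I ∈ (univ : Finset V).powersetCard t | IsIndepFinset G I} : ℝ) * ((t : ℝ) / M) ^ t
      ≤ 6 ^ t) :
    ∃ W : Finset V, #W = N ∧ ∀ I ⊆ W, #I = t → ¬ IsIndepFinset G I := by
  obtain ⟨n, hn⟩ : ∃ n, n = #(univ : Finset V) := ⟨_, rfl⟩
  obtain ⟨𝓘, h𝓘⟩ : ∃ 𝓘 : Finset (Finset V),
    𝓘 = {I ∈ (univ : Finset V).powersetCard t | IsIndepFinset G I} := ⟨_, rfl⟩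
  rw [← hn] at hN
  rw [← h𝓘] at h6
  have hM0 : 0 < M := ht0.trans_le htM
  have hn0 : 0 < n := by
    refine Nat.pos_of_ne_zero fun h => ?_
    rw [h, zero_mul] at hN
    exact absurd hN (by positivity)
  have hNn : N ≤ n := by
    have h1 : N * 8 * M ≤ n * M := by rw [hN]; gcongr
    have := Nat.le_of_mul_le_mul_right h1 hM0
    omega
  obtain ⟨W, -, hWN, hW⟩ := exists_subset_few (t := t) (univ : Finset V) 𝓘
    (fun I hI => by rw [h𝓘] at hI; exact (mem_powersetCard.1 (mem_filter.1 hI).1).2) N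
    (hn ▸ hNn) hN0
  rw [← hn] at hW
  refine ⟨W, hWN, fun I hIW hIt hI => ?_⟩
  have hNp : (N : ℝ) = n * ((t : ℝ) / M / 8) := by
    have h1 : (N : ℝ) * 8 * M = n * t := by exact_mod_cast hN
    field_simp
    linarith
  have h7 : (#{I ∈ 𝓘 | I ⊆ W} : ℝ) * (n : ℝ) ^ t < 1 * (n : ℝ) ^ t := by
    calc _ ≤ #𝓘 * (N : ℝ) ^ t := hW
      _ = (#𝓘 * ((t : ℝ) / M) ^ t) * (1 / 8) ^ t * (n : ℝ) ^ t := by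
        rw [hNp, mul_pow, div_pow _ (8 : ℝ), div_pow 1 (8 : ℝ), one_pow]; ring
      _ ≤ 6 ^ t * (1 / 8) ^ t * (n : ℝ) ^ t := by gcongr
      _ = (6 / 8) ^ t * (n : ℝ) ^ t := by rw [← mul_pow]; norm_num
      _ < 1 * (n : ℝ) ^ t := by
        gcongr
        exact pow_lt_one₀ (by norm_num) (by norm_num) ht0.ne'
  have h8 := lt_of_mul_lt_mul_right h7 (by positivity)
  have h9 : #{I ∈ 𝓘 | I ⊆ W} < 1 := by exact_mod_cast h8
  have hzero : #{I ∈ 𝓘 | I ⊆ W} = 0 := by omega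
  rw [card_eq_zero, h𝓘] at hzero
  refine notMem_empty I (hzero ▸ mem_filter.2 ⟨mem_filter.2 ⟨?_, hI⟩, hIW⟩)
  exact mem_powersetCard.2 ⟨subset_univ _, hIt⟩

/-- The lower bound at scale `e`, with `q = 2 ^ (2 * e + 1)` and `M = 2 ^ (5 * e + 5)`, the latter
being a power of two slightly above `q ^ (5 / 2)`. The sampled set has
`q ^ 3 * t / (8 * M) = 2 ^ (e - 5) * t` vertices. -/
theorem ramsey_gt {e t : ℕ} (he : 5 ≤ e)
    (ht : 8 * (2 * e + 1) ^ 2 * 2 ^ (4 * e + 2) ≤ t) (htM : t ≤ 2 ^ (5 * e + 5)) :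
    2 ^ (e - 5) * t < ramseyF (SimpleGraph.cycleGraph 6) t := by
  obtain ⟨F, _, _, _, σ, hσ, hq⟩ := exists_field e
  obtain ⟨q, hq'⟩ : ∃ q, q = Fintype.card F := ⟨_, rfl⟩
  obtain ⟨M, hM⟩ : ∃ M, M = 2 ^ (5 * e + 5) := ⟨_, rfl⟩
  rw [← hM] at htM
  rw [← hq'] at hq
  have hn : #(univ : Finset (F × F × F)) = q ^ 3 := by
    rw [card_univ, Fintype.card_prod, Fintype.card_prod, ← hq']; ring
  have hq2 : q ^ 2 = 2 ^ (4 * e + 2) := by rw [hq, ← pow_mul]; congr 1; ring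
  rw [← hq2] at ht
  have hq0 : 0 < q := by rw [hq]; exact Nat.two_pow_pos _
  have ht0 : 0 < t :=
    lt_of_lt_of_le (Nat.mul_pos (Nat.mul_pos (by norm_num) (pow_pos (by omega) 2))
      (pow_pos hq0 2)) ht
  have hq5 : 32 * q ^ 5 ≤ M ^ 2 := by
    rw [hq, hM, ← pow_mul, ← pow_mul, (by norm_num : 32 = 2 ^ 5), ← pow_add]
    exact Nat.pow_le_pow_right (by norm_num) (by omega)
  have hqM : 6 * q ^ 2 ≤ M := by
    have h : 2 ^ 3 * q ^ 2 ≤ M := by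
      rw [hq2, hM, ← pow_add]; exact Nat.pow_le_pow_right (by norm_num) (by omega)
    omega
  have hN : 2 ^ (e - 5) * t * 8 * M = #(univ : Finset (F × F × F)) * t := by
    have h : q ^ 3 = 2 ^ (e - 5) * 2 ^ 3 * M := by
      rw [hq, hM, ← pow_mul, ← pow_add, ← pow_add]; congr 1; omega
    rw [hn, h]; ring
  have hdeg : ∀ R : Finset (F × F × F), M < #R →
      ∃ v ∈ R, #R ≤ 2 * q ^ 2 * #{u ∈ R | (polGraph σ).Adj v u} := by
    intro R hR
    rw [hq']
    refine exists_large_degree_s3 hσ R (hq' ▸ hqM.trans hR.le) (hq' ▸ hq5.trans ?_)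
    exact Nat.pow_le_pow_left hR.le 2
  obtain ⟨W, hWN, hW⟩ := exists_subset_none (polGraph σ) ht0 htM
    (Nat.mul_pos (Nat.two_pow_pos _) ht0) hN
    (card_indep_le (polGraph σ) hn hq (by omega) (by omega) ht htM hdeg)
  rw [← hWN]
  exact lt_ramsey (polGraph σ) (c6_free hσ) W t hW

theorem sixteen_mul_sq_le {e : ℕ} (he : 14 ≤ e) : 16 * (2 * e + 3) ^ 2 ≤ 2 ^ e := by
  induction e, he using Nat.le_induction with
  | base => norm_num
  | succ e he ih => rw [pow_succ 2 e]; nlinarith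

/-- If `t` has order `e ^ 2 * 2 ^ (4 * e)`, then `2 ^ (e - 5)` has order at least
`t ^ (1 / 4) / (log t) ^ (1 / 2)`. -/
theorem final_bound {e t : ℕ} (he : 5 ≤ e) (h1 : 2 ^ (4 * e) ≤ t)
    (h2 : t ≤ 8 * (2 * e + 3) ^ 2 * 2 ^ (4 * e + 6)) :
    1 / 320 * (t : ℝ) ^ ((5 : ℝ) / 4) / (Real.log t) ^ ((1 : ℝ) / 2) ≤ 2 ^ (e - 5) * (t : ℝ) := by
  have ht0 : (0 : ℝ) < t := by exact_mod_cast lt_of_lt_of_le (by positivity) h1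
  have he0 : (0 : ℝ) < e := by exact_mod_cast (by omega : 0 < e)
  have hlog : (e : ℝ) ≤ Real.log t := by
    have h3 : Real.log ((2 : ℝ) ^ (4 * e)) ≤ Real.log t :=
      Real.log_le_log (by positivity) (by exact_mod_cast h1)
    rw [Real.log_pow] at h3
    have := Real.log_two_gt_d9
    push_cast at h3
    nlinarith
  have hlog' : (e : ℝ) ^ ((1 : ℝ) / 2) ≤ (Real.log t) ^ ((1 : ℝ) / 2) :=
    Real.rpow_le_rpow he0.le hlog (by norm_num)
  have hsq : ((e : ℝ) ^ ((1 : ℝ) / 2)) ^ 4 = (e : ℝ) ^ 2 := by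
    rw [← Real.rpow_natCast, ← Real.rpow_mul he0.le]
    norm_num
  have hroot : (t : ℝ) ^ ((1 : ℝ) / 4) ≤ 10 * 2 ^ e * (e : ℝ) ^ ((1 : ℝ) / 2) := by
    have h4 : (t : ℝ) ≤ (10 * 2 ^ e * (e : ℝ) ^ ((1 : ℝ) / 2)) ^ 4 := by
      rw [mul_pow, hsq]
      have h5 : t ≤ (10 * 2 ^ e) ^ 4 * e ^ 2 := by
        refine h2.trans ?_
        have : (2 * e + 3) ^ 2 ≤ (3 * e) ^ 2 := Nat.pow_le_pow_left (by omega) 2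
        calc _ ≤ 8 * (3 * e) ^ 2 * 2 ^ (4 * e + 6) := by gcongr
          _ = 4608 * ((2 ^ e) ^ 4 * e ^ 2) := by ring
          _ ≤ 10000 * ((2 ^ e) ^ 4 * e ^ 2) := by gcongr; norm_num
          _ = _ := by ring
      exact_mod_cast h5
    calc (t : ℝ) ^ ((1 : ℝ) / 4) ≤ ((10 * 2 ^ e * (e : ℝ) ^ ((1 : ℝ) / 2)) ^ 4) ^ ((1 : ℝ) / 4) :=
          Real.rpow_le_rpow ht0.le h4 (by norm_num)
      _ = _ := by
          rw [← Real.rpow_natCast, ← Real.rpow_mul (by positivity)]; norm_num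
  have h54 : (t : ℝ) ^ ((5 : ℝ) / 4) = t * (t : ℝ) ^ ((1 : ℝ) / 4) := by
    rw [(by norm_num : (5 : ℝ) / 4 = 1 + 1 / 4), Real.rpow_add ht0, Real.rpow_one]
  have hpow : (2 : ℝ) ^ e = 2 ^ (e - 5) * 32 := by
    rw [(by norm_num : (32 : ℝ) = 2 ^ 5), ← pow_add]; congr 1; omega
  have hepos : 0 < (e : ℝ) ^ ((1 : ℝ) / 2) := by positivity
  rw [div_le_iff₀ (hepos.trans_le hlog'), h54]
  calc 1 / 320 * (t * (t : ℝ) ^ ((1 : ℝ) / 4))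
      ≤ 1 / 320 * (t * (10 * 2 ^ e * (e : ℝ) ^ ((1 : ℝ) / 2))) := by gcongr
    _ = 2 ^ (e - 5) * t * (e : ℝ) ^ ((1 : ℝ) / 2) := by rw [hpow]; ring
    _ ≤ _ := by gcongr

/-- The scale of `t` is the largest `e` with
`8 * (2 * e + 1) ^ 2 * 2 ^ (4 * e + 2) ≤ t`. -/
theorem exists_scale {t : ℕ} (ht : 8 * 29 ^ 2 * 2 ^ 58 ≤ t) :
    ∃ e, 14 ≤ e ∧ 8 * (2 * e + 1) ^ 2 * 2 ^ (4 * e + 2) ≤ t ∧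
      t < 8 * (2 * e + 3) ^ 2 * 2 ^ (4 * e + 6) := by
  have hex : ∃ n, t < 8 * (2 * n + 1) ^ 2 * 2 ^ (4 * n + 2) := by
    refine ⟨t, Nat.lt_two_pow_self.trans_le ?_⟩
    calc 2 ^ t ≤ 2 ^ (4 * t + 2) := Nat.pow_le_pow_right (by norm_num) (by omega)
      _ ≤ _ := Nat.le_mul_of_pos_left _ (by positivity)
  have hspec := Nat.find_spec hex
  set n := Nat.find hex with hn
  have hn15 : 15 ≤ n := by
    by_contra! hlt
    have h1 : 8 * (2 * n + 1) ^ 2 * 2 ^ (4 * n + 2) ≤ 8 * (2 * 14 + 1) ^ 2 * 2 ^ (4 * 14 + 2) := by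
      gcongr <;> omega
    omega
  have hmin := Nat.find_min hex (m := n - 1) (by omega)
  obtain ⟨e, he⟩ : ∃ e, n = e + 1 := ⟨n - 1, by omega⟩
  rw [he] at hspec hmin
  rw [Nat.add_sub_cancel, not_lt] at hmin
  refine ⟨e, by omega, hmin, hspec.trans_eq (by ring)⟩

end Final

/-- There exist `c > 0` and `t₀` such that for all `t ≥ t₀`,
`r(C₆,t) ≥ c · t^{5/4} / (log t)^{1/2}`. -/
theorem ramsey_C6_lower :
    ∃ c : ℝ, 0 < c ∧ ∃ t₀ : ℕ, ∀ t : ℕ, t₀ ≤ t →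
      c * (t : ℝ) ^ ((5 : ℝ) / 4) / (Real.log t) ^ ((1 : ℝ) / 2)
        ≤ (ramseyF (SimpleGraph.cycleGraph 6) t : ℝ) := by
  refine ⟨1 / 320, by norm_num, 8 * 29 ^ 2 * 2 ^ 58, fun t ht => ?_⟩
  obtain ⟨e, he, hlo, hhi⟩ := exists_scale ht
  have h4 : 2 ^ (4 * e) ≤ t := by
    refine le_trans ?_ hlo
    rw [pow_add]
    nlinarith [Nat.one_le_two_pow (n := 4 * e), Nat.zero_le ((2 * e + 1) ^ 2),
      Nat.one_le_pow 2 (2 * e + 1) (by omega)]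
  have hM : t ≤ 2 ^ (5 * e + 5) := by
    refine hhi.le.trans ?_
    calc 8 * (2 * e + 3) ^ 2 * 2 ^ (4 * e + 6) = 16 * (2 * e + 3) ^ 2 * 2 ^ (4 * e + 5) := by ring
      _ ≤ 2 ^ e * 2 ^ (4 * e + 5) := Nat.mul_le_mul_right _ (sixteen_mul_sq_le he)
      _ = 2 ^ (5 * e + 5) := by rw [← pow_add]; congr 1; ring
  refine (final_bound (by omega) h4 hhi.le).trans ?_
  exact_mod_cast (ramsey_gt (by omega) hlo hM).le
end
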